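/- There exists a constant c' > 0 such that the following holds: if δ ∈ (0,1/10), N ≥ exp(exp(δ^{−c'})) is an integer, and A ⊆ [N]² has size at least δN², then the number of triples (x,y,z) ∈ ℤ³ with z ≠ 0 such that (x,y), (x+z,y), (x,y+z) all lie in A is at least exp(−exp(δ^{−c'}))·N³. -/

import Mathlib

/-!
The set is moved to the square of the cyclic group `ℤ / 2N`, where its density is still at least
`δ / 4` and every corner comes from an integer corner (`cnt_lift_le`); the at most `4 N ^ 2` trivial
corners are negligible. It remains to count corners in the square of a finite abelian group
(`group_corners`), by a density increment argument run on translates of regular Bohr sets.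

Suppose that, on a cell `B × B`, the indicator `a` of the set is supported on a product
`e₁ ⊗ e₂` and exceeds density `σ` relative to it, by `ξ` in absolute terms. Consider the energy: the
average of `a - σ (e₁ ⊗ e₂)` plus `ξ / 4` times the squares of the densities of `e₁` and `e₂`.
It is bounded by two, so among all translates of Bohr sets of bounded level there is one on
which it cannot be increased by more than `ε` by passing three levels down (`exists_stable`).
Stability has two consequences: `e₁` and `e₂` have small local Fourier coefficients around almost
every point (`variance`, `phi_average`), and `a - σ (e₁ ⊗ e₂)` has average at least `ξ / 2`,
so that the density of `a` is at least `σ` times that of `e₁ ⊗ e₂` and Cauchy-Schwarz gives the main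
term for the number of corners (`main_term`). If the number of corners is much smaller than it should be, the
von Neumann inequality (`vonNeumann`), in which the Fourier uniformity of `e₁` and `e₂` allows the
weights to be removed (`cst_average`), shows that the balanced function has a large box norm on
some cell, hence correlates with a product set, and `a` has increased relative density on
a product of subsets of `e₁` and `e₂` (`box_increment`, `stable_increment`).

Each such step raises `σ` by a constant multiple of `δ ^ 12` and shrinks `ξ` by a factor polynomial
in `δ`, and `σ` stays below one, so there are `O(δ ^ (-12))` steps (`Excess.many`).
Hence all widths and ranks are exponential in a power of `1 / δ`, and the Bohr sets
have doubly exponential density (`card_le_bohr`, `params_bound`).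
-/

open Finset

noncomputable section

/-- `[N] = {0, 1, ..., N-1}` as a finset of integers. -/
def I0 (N : ℤ) : Finset ℤ := Finset.Ico 0 N

namespace Corner

set_option linter.unusedSectionVars false

open scoped BigOperators Pointwise ComplexConjugate

section Group

variable {G : Type*} [AddCommGroup G] [Fintype G] [DecidableEq G]

/-! ### Small sets and averages -/

/-- `B'` is small relative to `B`: adding `B'` to `B` enlarges `B` by a factor at most `1 + ε`. -/
structure Small (ε : ℝ) (B B' : Finset G) : Prop where
  zero : (0 : G) ∈ B'
  sub : B' ⊆ B
  card : ((B + B').card : ℝ) ≤ (1 + ε) * B.card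

lemma Small.pos {ε : ℝ} {B B' : Finset G} (h : Small ε B B') : 0 < (B.card : ℝ) := by
  have : B.Nonempty := ⟨0, h.sub h.zero⟩
  exact_mod_cast this.card_pos

lemma sum_sub_le {U B : Finset G} (hBU : B ⊆ U) (f : G → ℝ) (hf : ∀ x, |f x| ≤ 1) :
    |∑ x ∈ U, f x - ∑ x ∈ B, f x| ≤ (U.card : ℝ) - B.card := by
  rw [← Finset.sum_sdiff hBU, add_sub_cancel_right]
  calc |∑ x ∈ U \ B, f x| ≤ ∑ x ∈ U \ B, |f x| := Finset.abs_sum_le_sum_abs _ _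
    _ ≤ ∑ x ∈ U \ B, (1 : ℝ) := Finset.sum_le_sum fun x _ => hf x
    _ = (U.card : ℝ) - B.card := by
        rw [Finset.sum_const, Finset.card_sdiff_of_subset hBU, nsmul_one,
          Nat.cast_sub (Finset.card_le_card hBU)]

/-- Averages over `B` are almost invariant under translation by elements of `B'`. -/
lemma Small.shift {ε : ℝ} {B B' : Finset G} (h : Small ε B B') {b' : G} (hb : b' ∈ B')
    (f : G → ℝ) (hf : ∀ x, |f x| ≤ 1) :
    |𝔼 b ∈ B, f (b + b') - 𝔼 b ∈ B, f b| ≤ 2 * ε := by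
  have hpos := h.pos
  rw [expect_eq_sum_div_card, expect_eq_sum_div_card, ← sub_div, abs_div, abs_of_pos hpos,
    div_le_iff₀ hpos]
  have e1 : ∑ b ∈ B, f (b + b') = ∑ c ∈ B.map (addRightEmbedding b'), f c := by
    simp
  have s1 : B.map (addRightEmbedding b') ⊆ B + B' := by
    intro x hx
    simp only [Finset.mem_map, addRightEmbedding_apply] at hx
    obtain ⟨y, hy, rfl⟩ := hx
    exact Finset.add_mem_add hy hb
  have s2 : B ⊆ B + B' := fun x hx => by
    have := Finset.add_mem_add hx h.zero
    simpa using this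
  have k1 := sum_sub_le s1 f hf
  have k2 := sum_sub_le s2 f hf
  rw [Finset.card_map] at k1
  rw [e1]
  have := h.card
  rw [abs_le] at *
  constructor <;> nlinarith

lemma abs_expect_le_of {ι : Type*} (s : Finset ι) (f : ι → ℝ) {c : ℝ} (hc : 0 ≤ c)
    (h : ∀ i ∈ s, |f i| ≤ c) : |𝔼 i ∈ s, f i| ≤ c := by
  rcases s.eq_empty_or_nonempty with rfl | hs
  · simpa using hc
  · exact (abs_expect_le s f).trans (expect_le hs h)

lemma Small.shift_avg {ε : ℝ} (hε : 0 ≤ ε) {B B' : Finset G} (h : Small ε B B')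
    (f : G → ℝ) (hf : ∀ x, |f x| ≤ 1) :
    |𝔼 b ∈ B, 𝔼 b' ∈ B', f (b + b') - 𝔼 b ∈ B, f b| ≤ 2 * ε := by
  have hne : B'.Nonempty := ⟨0, h.zero⟩
  rw [expect_comm, ← expect_const hne (𝔼 b ∈ B, f b), ← expect_sub_distrib]
  exact abs_expect_le_of _ _ (by positivity) fun b' hb => h.shift hb f hf

lemma parseval (S : Finset G) (f : G → ℝ) :
    ∑ γ : AddChar G ℂ, ‖∑ x ∈ S, (f x : ℂ) * γ x‖ ^ 2 = Fintype.card G * ∑ x ∈ S, f x ^ 2 := by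
  have key : ∑ γ : AddChar G ℂ, ((‖∑ x ∈ S, (f x : ℂ) * γ x‖ ^ 2 : ℝ) : ℂ)
      = Fintype.card G * ∑ x ∈ S, (f x : ℂ) ^ 2 := by
    have h1 : ∀ γ : AddChar G ℂ, ((‖∑ x ∈ S, (f x : ℂ) * γ x‖ ^ 2 : ℝ) : ℂ)
        = ∑ x ∈ S, ∑ y ∈ S, (f x : ℂ) * f y * γ (x - y) := by
      intro γ
      rw [Complex.ofReal_pow, ← Complex.mul_conj', map_sum, Finset.sum_mul_sum]
      refine Finset.sum_congr rfl fun x _ => Finset.sum_congr rfl fun y _ => ?_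
      rw [map_mul, Complex.conj_ofReal, sub_eq_add_neg, AddChar.map_add_eq_mul,
        AddChar.map_neg_eq_conj]
      ring
    rw [Finset.sum_congr rfl fun γ _ => h1 γ, Finset.sum_comm, Finset.mul_sum]
    refine Finset.sum_congr rfl fun x hx => ?_
    rw [Finset.sum_comm]
    have : ∀ y ∈ S, ∑ γ : AddChar G ℂ, (f x : ℂ) * f y * γ (x - y)
        = if x = y then (Fintype.card G : ℂ) * (f x : ℂ) ^ 2 else 0 := by
      intro y _
      rw [← Finset.mul_sum, AddChar.sum_apply_eq_ite]
      simp only [sub_eq_zero]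
      split_ifs with h
      · subst h; ring
      · simp
    rw [Finset.sum_congr rfl this, Finset.sum_ite_eq, if_pos hx]
  exact_mod_cast key

/-- A bilinear form with kernel `F (s - q)` is controlled by the Fourier transform of one of its
two arguments. -/
lemma fourier_bound {B₁ B₂ : Finset G} (hsym : ∀ b ∈ B₁, -b ∈ B₁)
    (hne₁ : B₁.Nonempty) (hne₂ : B₂.Nonempty)
    (hcard : ((B₁ + B₂).card : ℝ) ≤ 2 * B₁.card) (F a b : G → ℝ)
    (hF : ∀ x, |F x| ≤ 1) (ha : ∀ x, |a x| ≤ 1) {Φ : ℝ}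
    (hΦ : ∀ γ : AddChar G ℂ, ‖∑ s ∈ B₂, (b s : ℂ) * γ s‖ ≤ Φ * B₂.card) :
    |𝔼 q ∈ B₁, 𝔼 s ∈ B₂, F (s - q) * a q * b s| ≤ 2 * Φ := by
  set N : ℝ := (Fintype.card G : ℝ) with hN
  have hNpos : 0 < N := by
    have : Nonempty G := ⟨0⟩
    rw [hN]; exact_mod_cast Fintype.card_pos
  set W := B₁ + B₂ with hW
  set S : ℝ := ∑ q ∈ B₁, ∑ s ∈ B₂, F (s - q) * a q * b s with hS
  have hmem : ∀ q ∈ B₁, ∀ s ∈ B₂, s - q ∈ W := by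
    intro q hq s hs
    have := Finset.add_mem_add (hsym q hq) hs
    rwa [neg_add_eq_sub] at this
  have triple : ((N * S : ℝ) : ℂ) = ∑ γ : AddChar G ℂ, (∑ s ∈ B₂, (b s : ℂ) * γ s) *
      ((∑ q ∈ B₁, (a q : ℂ) * conj (γ q)) * (∑ w ∈ W, (F w : ℂ) * conj (γ w))) := by
    have h1 : ∀ γ : AddChar G ℂ, (∑ s ∈ B₂, (b s : ℂ) * γ s) *
        ((∑ q ∈ B₁, (a q : ℂ) * conj (γ q)) * (∑ w ∈ W, (F w : ℂ) * conj (γ w)))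
        = ∑ q ∈ B₁, ∑ s ∈ B₂, ∑ w ∈ W, (F w : ℂ) * a q * b s * γ ((s - q) - w) := by
      intro γ
      rw [← mul_assoc, mul_comm (∑ s ∈ B₂, _), Finset.sum_mul_sum, Finset.sum_mul]
      refine Finset.sum_congr rfl fun q _ => ?_
      rw [Finset.sum_mul]
      refine Finset.sum_congr rfl fun s _ => ?_
      rw [Finset.mul_sum]
      refine Finset.sum_congr rfl fun w _ => ?_
      rw [sub_eq_add_neg, sub_eq_add_neg, AddChar.map_add_eq_mul, AddChar.map_add_eq_mul,
        AddChar.map_neg_eq_conj, AddChar.map_neg_eq_conj]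
      ring
    rw [Finset.sum_congr rfl fun γ _ => h1 γ, Finset.sum_comm, hS]
    push_cast
    rw [Finset.mul_sum]
    refine Finset.sum_congr rfl fun q hq => ?_
    rw [Finset.sum_comm, Finset.mul_sum]
    refine Finset.sum_congr rfl fun s hs => ?_
    rw [Finset.sum_comm]
    have : ∀ w ∈ W, ∑ γ : AddChar G ℂ, (F w : ℂ) * a q * b s * γ ((s - q) - w)
        = if s - q = w then (N : ℂ) * (F (s - q) * a q * b s) else 0 := by
      intro w _
      rw [← Finset.mul_sum, AddChar.sum_apply_eq_ite]
      simp only [sub_eq_zero (a := s - q)]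
      split_ifs with h
      · subst h; rw [hN]; push_cast; ring
      · simp
    rw [Finset.sum_congr rfl this, Finset.sum_ite_eq, if_pos (hmem q hq s hs)]
  have hc₁ : (0 : ℝ) < B₁.card := by exact_mod_cast hne₁.card_pos
  have hc₂ : (0 : ℝ) < B₂.card := by exact_mod_cast hne₂.card_pos
  have hΦ0 : 0 ≤ Φ * B₂.card := (norm_nonneg _).trans (hΦ 0)
  have conjnorm : ∀ (T : Finset G) (f : G → ℝ) (γ : AddChar G ℂ),
      ‖∑ q ∈ T, (f q : ℂ) * conj (γ q)‖ = ‖∑ q ∈ T, (f q : ℂ) * γ q‖ := by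
    intro T f γ
    rw [← Complex.norm_conj (∑ q ∈ T, (f q : ℂ) * γ q), map_sum]
    simp only [map_mul, Complex.conj_ofReal]
  have sqle : ∀ (T : Finset G) (f : G → ℝ), (∀ x, |f x| ≤ 1) →
      ∑ x ∈ T, f x ^ 2 ≤ T.card := by
    intro T f hf
    calc ∑ x ∈ T, f x ^ 2 ≤ ∑ x ∈ T, (1 : ℝ) := Finset.sum_le_sum fun x _ => by
            rw [sq_le_one_iff_abs_le_one]; exact hf x
      _ = T.card := by simp
  have main : N * |S| ≤ Φ * B₂.card * (N * (2 * B₁.card)) := by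
    have : N * |S| = ‖((N * S : ℝ) : ℂ)‖ := by
      rw [Complex.norm_real, Real.norm_eq_abs, abs_mul, abs_of_pos hNpos]
    rw [this, triple]
    calc _ ≤ ∑ γ : AddChar G ℂ, Φ * B₂.card * ((‖∑ q ∈ B₁, (a q : ℂ) * γ q‖ ^ 2 +
            ‖∑ w ∈ W, (F w : ℂ) * γ w‖ ^ 2) / 2) := by
          refine (norm_sum_le _ _).trans (Finset.sum_le_sum fun γ _ => ?_)
          rw [norm_mul, norm_mul, conjnorm, conjnorm]
          refine mul_le_mul (hΦ γ) ?_ (by positivity) hΦ0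
          nlinarith [sq_nonneg (‖∑ q ∈ B₁, (a q : ℂ) * γ q‖ - ‖∑ w ∈ W, (F w : ℂ) * γ w‖)]
      _ = Φ * B₂.card * (N * ((∑ q ∈ B₁, a q ^ 2 + ∑ w ∈ W, F w ^ 2) / 2)) := by
          rw [← Finset.mul_sum, ← Finset.sum_div, Finset.sum_add_distrib, parseval, parseval]
          ring
      _ ≤ _ := by
          refine mul_le_mul_of_nonneg_left (mul_le_mul_of_nonneg_left ?_ hNpos.le) hΦ0
          have := sqle B₁ a ha
          have := sqle W F hF
          linarith
  have eq : 𝔼 q ∈ B₁, 𝔼 s ∈ B₂, F (s - q) * a q * b s = S / (B₁.card * B₂.card) := by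
    simp only [expect_eq_sum_div_card]
    rw [← Finset.sum_div, div_div, mul_comm (B₂.card : ℝ)]
  rw [eq, abs_div, abs_of_pos (mul_pos hc₁ hc₂), div_le_iff₀ (mul_pos hc₁ hc₂)]
  have : N * |S| ≤ N * (2 * Φ * (B₁.card * B₂.card)) := by linarith [main]
  exact le_of_mul_le_mul_left this hNpos

/-! ### Cauchy-Schwarz for iterated averages -/

lemma cs_one {ι : Type*} (s : Finset ι) (f g : ι → ℝ) (hf : ∀ i, |f i| ≤ 1) :
    (𝔼 i ∈ s, f i * g i) ^ 2 ≤ 𝔼 i ∈ s, g i ^ 2 := by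
  rcases s.eq_empty_or_nonempty with rfl | hs
  · simp
  refine (expect_mul_sq_le_sq_mul_sq s f g).trans ?_
  have h1 : 𝔼 i ∈ s, f i ^ 2 ≤ 1 := expect_le hs fun i _ => by
    rw [sq_le_one_iff_abs_le_one]; exact hf i
  have h2 : 0 ≤ 𝔼 i ∈ s, g i ^ 2 := expect_nonneg fun i _ => sq_nonneg _
  nlinarith

lemma sq_avg {ι : Type*} (s : Finset ι) (f : ι → ℝ) :
    (𝔼 i ∈ s, f i) ^ 2 = 𝔼 i ∈ s, 𝔼 j ∈ s, f i * f j := by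
  rw [sq, expect_mul_expect]

lemma cs_two {ι κ : Type*} (s : Finset ι) (t : Finset κ) (f g : ι → κ → ℝ) :
    (𝔼 i ∈ s, 𝔼 j ∈ t, f i j * g i j) ^ 2
      ≤ (𝔼 i ∈ s, 𝔼 j ∈ t, f i j ^ 2) * 𝔼 i ∈ s, 𝔼 j ∈ t, g i j ^ 2 := by
  have := expect_mul_sq_le_sq_mul_sq (s ×ˢ t) (fun x => f x.1 x.2) (fun x => g x.1 x.2)
  simpa only [expect_product] using this

lemma cs_two_one {ι κ : Type*} (s : Finset ι) (t : Finset κ) (f g : ι → κ → ℝ)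
    (hf : ∀ i j, |f i j| ≤ 1) :
    (𝔼 i ∈ s, 𝔼 j ∈ t, f i j * g i j) ^ 2 ≤ 𝔼 i ∈ s, 𝔼 j ∈ t, g i j ^ 2 := by
  have := cs_one (s ×ˢ t) (fun x => f x.1 x.2) (fun x => g x.1 x.2) fun x => hf _ _
  simpa only [expect_product] using this

lemma cs_weight {ι κ : Type*} (s : Finset ι) (t : Finset κ) (g w R : ι → κ → ℝ)
    (hg : ∀ i j, |g i j| ≤ w i j) :
    (𝔼 i ∈ s, 𝔼 j ∈ t, g i j * R i j) ^ 2
      ≤ (𝔼 i ∈ s, 𝔼 j ∈ t, w i j) * 𝔼 i ∈ s, 𝔼 j ∈ t, w i j * R i j ^ 2 := by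
  have hw : ∀ i j, 0 ≤ w i j := fun i j => (abs_nonneg _).trans (hg i j)
  have h1 : |𝔼 i ∈ s, 𝔼 j ∈ t, g i j * R i j|
      ≤ 𝔼 i ∈ s, 𝔼 j ∈ t, √(w i j) * (√(w i j) * |R i j|) := by
    refine (abs_expect_le _ _).trans (expect_le_expect fun i _ =>
      (abs_expect_le _ _).trans (expect_le_expect fun j _ => ?_))
    rw [abs_mul, ← mul_assoc, Real.mul_self_sqrt (hw i j)]
    exact mul_le_mul_of_nonneg_right (hg i j) (abs_nonneg _)
  have h2 := cs_two s t (fun i j => √(w i j)) (fun i j => √(w i j) * |R i j|)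
  simp only [mul_pow, Real.sq_sqrt (hw _ _), sq_abs] at h2
  refine le_trans ?_ h2
  rw [← sq_abs]
  exact pow_le_pow_left₀ (abs_nonneg _) h1 2

lemma avg_nonneg {ι : Type*} {s : Finset ι} {f : ι → ℝ} (h : ∀ i, 0 ≤ f i) :
    0 ≤ 𝔼 i ∈ s, f i := expect_nonneg fun i _ => h i

lemma avg_mono {ι : Type*} {s : Finset ι} {f g : ι → ℝ} (h : ∀ i, f i ≤ g i) :
    𝔼 i ∈ s, f i ≤ 𝔼 i ∈ s, g i := expect_le_expect fun i _ => h i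

lemma avg_abs_le {ι : Type*} {s : Finset ι} {f : ι → ℝ} {c : ℝ} (hc : 0 ≤ c)
    (h : ∀ i, |f i| ≤ c) : |𝔼 i ∈ s, f i| ≤ c := abs_expect_le_of s f hc fun i _ => h i

lemma avg_le {ι : Type*} {s : Finset ι} {f : ι → ℝ} {c : ℝ} (hc : 0 ≤ c)
    (h : ∀ i, f i ≤ c) : 𝔼 i ∈ s, f i ≤ c := by
  rcases s.eq_empty_or_nonempty with rfl | hs
  · simpa using hc
  · exact expect_le hs fun i _ => h i

lemma abs_mul_le_one {x y : ℝ} (hx : |x| ≤ 1) (hy : |y| ≤ 1) : |x * y| ≤ 1 := by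
  rw [abs_mul]; exact mul_le_one₀ hx (abs_nonneg _) hy

/-! ### Fourier bias controls bilinear forms -/

/-- The largest Fourier coefficient of `F` on the translate `z + B`. -/
def phi (B : Finset G) (F : G → ℝ) (z : G) : ℝ :=
  (univ : Finset (AddChar G ℂ)).sup' ⟨0, mem_univ _⟩
    fun γ => ‖∑ s ∈ B, (F (z + s) : ℂ) * γ s‖ / B.card

lemma phi_ge (B : Finset G) (F : G → ℝ) (z : G) (γ : AddChar G ℂ) :
    ‖∑ s ∈ B, (F (z + s) : ℂ) * γ s‖ / B.card ≤ phi B F z :=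
  Finset.le_sup' (fun γ : AddChar G ℂ => ‖∑ s ∈ B, (F (z + s) : ℂ) * γ s‖ / B.card)
    (mem_univ γ)

lemma exists_phi (B : Finset G) (F : G → ℝ) (z : G) :
    ∃ γ : AddChar G ℂ, phi B F z = ‖∑ s ∈ B, (F (z + s) : ℂ) * γ s‖ / B.card := by
  obtain ⟨γ, -, h⟩ := Finset.exists_mem_eq_sup' (s := (univ : Finset (AddChar G ℂ)))
    ⟨0, mem_univ _⟩ fun γ : AddChar G ℂ => ‖∑ s ∈ B, (F (z + s) : ℂ) * γ s‖ / B.card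
  exact ⟨γ, h⟩

lemma phi_nonneg (B : Finset G) (F : G → ℝ) (z : G) : 0 ≤ phi B F z :=
  le_trans (by positivity) (phi_ge B F z 0)

lemma phi_le_one (B : Finset G) (F : G → ℝ) (hF : ∀ x, |F x| ≤ 1) (z : G) : phi B F z ≤ 1 := by
  obtain ⟨γ, h⟩ := exists_phi B F z
  rw [h]
  refine div_le_one_of_le₀ ?_ (by positivity)
  calc _ ≤ ∑ s ∈ B, ‖(F (z + s) : ℂ) * γ s‖ := norm_sum_le _ _
    _ ≤ ∑ s ∈ B, (1 : ℝ) := by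
        refine Finset.sum_le_sum fun s _ => ?_
        rw [norm_mul, AddChar.norm_apply, mul_one, Complex.norm_real]
        exact hF _
    _ = B.card := by simp

/-- A bilinear form with kernel `F (X + s - q)` is small as soon as `F` has small Fourier
coefficients on most of the translates `X - q + B₂`. -/
lemma bilinear_pow_four {B₁ B₂ : Finset G} (hsym : ∀ b ∈ B₁, -b ∈ B₁)
    (hne₁ : B₁.Nonempty) (hne₂ : B₂.Nonempty)
    (hcard : ((B₁ + B₂).card : ℝ) ≤ 2 * B₁.card) (F a b : G → ℝ)
    (hF : ∀ x, |F x| ≤ 1) (ha : ∀ x, |a x| ≤ 1) (hb : ∀ x, |b x| ≤ 1) (X : G) :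
    (𝔼 q ∈ B₁, 𝔼 s ∈ B₂, F (X + (s - q)) * a q * b s) ^ 4
      ≤ 2 * 𝔼 q ∈ B₁, phi B₂ F (X - q) := by
  set I := 𝔼 q ∈ B₁, 𝔼 s ∈ B₂, F (X + (s - q)) * a q * b s with hI
  set K : G → G → ℝ := fun s s' => 𝔼 q ∈ B₁, F (X + (s - q)) * F (X + (s' - q)) with hK
  have h1 : I ^ 2 ≤ 𝔼 s ∈ B₂, 𝔼 s' ∈ B₂, (b s * b s') * K s s' := by
    have e : I = 𝔼 q ∈ B₁, a q * 𝔼 s ∈ B₂, F (X + (s - q)) * b s := by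
      refine expect_congr rfl fun q _ => ?_
      rw [mul_expect]
      exact expect_congr rfl fun s _ => by ring
    rw [e]
    refine (cs_one _ _ _ ha).trans (le_of_eq ?_)
    simp only [sq_avg]
    simp only [hK, mul_expect]
    rw [expect_comm]
    refine expect_congr rfl fun s _ => ?_
    rw [expect_comm]
    refine expect_congr rfl fun s' _ => expect_congr rfl fun q _ => by ring
  have h2 : I ^ 4 ≤ 𝔼 s ∈ B₂, 𝔼 s' ∈ B₂, K s s' ^ 2 := by
    calc I ^ 4 = (I ^ 2) ^ 2 := by ring
      _ ≤ (𝔼 s ∈ B₂, 𝔼 s' ∈ B₂, (b s * b s') * K s s') ^ 2 :=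
          pow_le_pow_left₀ (sq_nonneg _) h1 2
      _ ≤ _ := cs_two_one _ _ _ _ fun s s' => abs_mul_le_one (hb _) (hb _)
  refine h2.trans ?_
  have e2 : 𝔼 s ∈ B₂, 𝔼 s' ∈ B₂, K s s' ^ 2 = 𝔼 s' ∈ B₂, 𝔼 q' ∈ B₁,
      (𝔼 q ∈ B₁, 𝔼 s ∈ B₂, F (X + (s - q)) * F (X + (s' - q)) * F (X - q' + s))
        * F (X + (s' - q')) := by
    rw [expect_comm]
    refine expect_congr rfl fun s' _ => ?_
    simp only [hK, sq_avg]
    simp only [expect_mul]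
    have e3 : ∀ s : G, (𝔼 q ∈ B₁, 𝔼 q' ∈ B₁, F (X + (s - q)) * F (X + (s' - q)) *
        (F (X + (s - q')) * F (X + (s' - q')))) = 𝔼 q' ∈ B₁, 𝔼 q ∈ B₁, F (X + (s - q)) *
        F (X + (s' - q)) * (F (X + (s - q')) * F (X + (s' - q'))) := fun s => expect_comm _ _ _
    simp only [e3]
    rw [expect_comm]
    refine expect_congr rfl fun q' _ => ?_
    rw [expect_comm]
    refine expect_congr rfl fun q _ => expect_congr rfl fun s _ => ?_
    rw [show X - q' + s = X + (s - q') by abel]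
    ring
  rw [e2, mul_expect]
  refine expect_le hne₂ fun s' _ => expect_le_expect fun q' _ => ?_
  have h3 := fourier_bound hsym hne₁ hne₂ hcard (fun x => F (X + x)) (fun q => F (X + (s' - q)))
    (fun s => F (X - q' + s)) (fun x => hF _) (fun x => hF _) (Φ := phi B₂ F (X - q'))
    fun γ => by
      have := phi_ge B₂ F (X - q') γ
      rwa [div_le_iff₀ (by exact_mod_cast hne₂.card_pos)] at this
  refine (le_abs_self _).trans ?_
  rw [abs_mul]
  have := hF (X + (s' - q'))
  have h0 := abs_nonneg (F (X + (s' - q')))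
  calc _ ≤ (2 * phi B₂ F (X - q')) * 1 := mul_le_mul h3 this h0 ((abs_nonneg _).trans h3)
    _ = _ := mul_one _

/-! ### The counting form and the box norm -/

/-- The average of `F p q * g (s - q) q * h p (s - p)` over `p, q ∈ B₁`, `s ∈ B₂`; the three points
`(p, q)`, `(s - q, q)`, `(p, s - p)` form a corner with side `s - p - q`. -/
def corner (B₁ B₂ : Finset G) (F g h : G → G → ℝ) : ℝ :=
  𝔼 p ∈ B₁, 𝔼 q ∈ B₁, 𝔼 s ∈ B₂, F p q * g (s - q) q * h p (s - p)

/-- The fourth power of the Gowers box norm of `F` on `B × B`. -/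
def box (B : Finset G) (F : G → G → ℝ) : ℝ :=
  𝔼 p ∈ B, 𝔼 p' ∈ B, (𝔼 q ∈ B, F p q * F p' q) ^ 2

lemma box_nonneg (B : Finset G) (F : G → G → ℝ) : 0 ≤ box B F :=
  avg_nonneg fun _ => avg_nonneg fun _ => sq_nonneg _

lemma box_le_one (B : Finset G) (F : G → G → ℝ) (hF : ∀ p q, |F p q| ≤ 1) : box B F ≤ 1 := by
  refine avg_le zero_le_one fun p => avg_le zero_le_one fun p' => ?_
  rw [sq_le_one_iff_abs_le_one]
  exact avg_abs_le zero_le_one fun q => abs_mul_le_one (hF _ _) (hF _ _)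

set_option maxHeartbeats 1000000 in
/-- Generalised von Neumann inequality: if `e₁` and `e₂` behave like the constants `α₁`, `α₂`
in bilinear averages, the count of corners weighted by `F` is controlled by the box norm. -/
lemma vonNeumann {B₁ B₂ : Finset G} (hne₂ : B₂.Nonempty)
    (e₁ e₂ : G → ℝ) (a F : G → G → ℝ) {α₁ α₂ c₁ c₂ d₁ d₂ : ℝ}
    (he₁ : ∀ x, 0 ≤ e₁ x ∧ e₁ x ≤ 1) (he₂ : ∀ x, 0 ≤ e₂ x ∧ e₂ x ≤ 1)
    (ha : ∀ x y, 0 ≤ a x y ∧ a x y ≤ e₁ x * e₂ y) (hF : ∀ x y, |F x y| ≤ 1)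
    (hα₁ : 0 ≤ α₁) (hα₁' : α₁ ≤ 1) (hα₂ : 0 ≤ α₂) (hα₂' : α₂ ≤ 1)
    (hd₁ : 0 ≤ d₁) (hd₂ : 0 ≤ d₂)
    (hc₁ : ∀ u v : G → ℝ, (∀ x, |u x| ≤ 1) → (∀ x, |v x| ≤ 1) →
      |𝔼 q ∈ B₁, 𝔼 s ∈ B₂, (e₁ (s - q) - α₁) * u q * v s| ≤ c₁)
    (hc₂ : ∀ u v : G → ℝ, (∀ x, |u x| ≤ 1) → (∀ x, |v x| ≤ 1) →
      |𝔼 q ∈ B₁, 𝔼 s ∈ B₂, (e₂ (s - q) - α₂) * u q * v s| ≤ c₂)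
    (hm₁ : 𝔼 p ∈ B₁, e₁ p ≤ α₁ + d₁) (hm₂ : 𝔼 p ∈ B₁, e₂ p ≤ α₂ + d₂) :
    corner B₁ B₂ F a a ^ 2 ≤ α₁ ^ 3 * α₂ ^ 3 * √(box B₁ F) + d₁ + d₂ + 2 * c₁ + 2 * c₂ := by
  have hc₁0 : 0 ≤ c₁ := (abs_nonneg _).trans (hc₁ 0 0 (by simp) (by simp))
  have hc₂0 : 0 ≤ c₂ := (abs_nonneg _).trans (hc₂ 0 0 (by simp) (by simp))
  have habs₁ : ∀ x, |e₁ x| ≤ 1 := fun x => abs_le.2 ⟨by linarith [(he₁ x).1], (he₁ x).2⟩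
  have habs₂ : ∀ x, |e₂ x| ≤ 1 := fun x => abs_le.2 ⟨by linarith [(he₂ x).1], (he₂ x).2⟩
  have ha1 : ∀ x y, a x y ≤ 1 := fun x y =>
    (ha x y).2.trans (mul_le_one₀ (he₁ x).2 (he₂ y).1 (he₂ y).2)
  have haabs : ∀ x y, |a x y| ≤ 1 := fun x y => abs_le.2 ⟨by linarith [(ha x y).1], ha1 x y⟩
  set R : G → G → ℝ := fun q s => 𝔼 p ∈ B₁, F p q * a p (s - p) with hR
  have hR1 : ∀ q s, |R q s| ≤ 1 := fun q s =>
    avg_abs_le zero_le_one fun p => abs_mul_le_one (hF _ _) (haabs _ _)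
  have hT : corner B₁ B₂ F a a = 𝔼 q ∈ B₁, 𝔼 s ∈ B₂, a (s - q) q * R q s := by
    rw [corner, expect_comm]
    refine expect_congr rfl fun q _ => ?_
    rw [expect_comm]
    refine expect_congr rfl fun s _ => ?_
    rw [hR, mul_expect]
    exact expect_congr rfl fun p _ => by ring
  set P := 𝔼 q ∈ B₁, 𝔼 s ∈ B₂, e₁ (s - q) * e₂ q with hP
  set Q := 𝔼 q ∈ B₁, 𝔼 s ∈ B₂, e₁ (s - q) * e₂ q * R q s ^ 2 with hQ
  -- Cauchy-Schwarz in `(q, s)` with the weight `e₁ (s - q) * e₂ q`, which majorises `a (s - q) q`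
  have hPQ : corner B₁ B₂ F a a ^ 2 ≤ P * Q := by
    rw [hT]
    refine cs_weight B₁ B₂ (fun q s => a (s - q) q) (fun q s => e₁ (s - q) * e₂ q) R fun q s => ?_
    rw [abs_of_nonneg (ha _ _).1]
    exact (ha _ _).2
  have hQ0 : 0 ≤ Q := avg_nonneg fun q => avg_nonneg fun s =>
    mul_nonneg (mul_nonneg (he₁ _).1 (he₂ _).1) (sq_nonneg _)
  have hQ1 : Q ≤ 1 := avg_le zero_le_one fun q => avg_le zero_le_one fun s => by
    refine mul_le_one₀ (mul_le_one₀ (he₁ _).2 (he₂ _).1 (he₂ _).2) (sq_nonneg _) ?_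
    rw [sq_le_one_iff_abs_le_one]; exact hR1 q s
  -- uniformity of `e₁` replaces the factor `e₁ (s - q)` by `α₁`, here and in `hQa`
  have hP1 : P ≤ α₁ * α₂ + d₂ + c₁ := by
    have h1 := (abs_le.1 (hc₁ e₂ (fun _ => 1) habs₂ (by simp))).2
    have h2 : P = 𝔼 q ∈ B₁, 𝔼 s ∈ B₂, (e₁ (s - q) - α₁) * e₂ q * 1 + α₁ * 𝔼 q ∈ B₁, e₂ q := by
      rw [mul_expect, ← expect_add_distrib]
      refine expect_congr rfl fun q _ => ?_
      rw [← expect_const hne₂ (α₁ * e₂ q), ← expect_add_distrib]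
      exact expect_congr rfl fun s _ => by ring
    rw [h2]
    have h3 := mul_le_mul_of_nonneg_left hm₂ hα₁
    nlinarith
  set U : G → G → ℝ := fun p p' => 𝔼 q ∈ B₁, F p q * F p' q with hU
  set V : G → G → ℝ := fun p p' => 𝔼 s ∈ B₂, a p (s - p) * a p' (s - p') with hV
  set W : G → G → ℝ := fun p p' => 𝔼 s ∈ B₂, e₂ (s - p) * e₂ (s - p') with hW
  have hU1 : ∀ p p', |U p p'| ≤ 1 := fun p p' =>
    avg_abs_le zero_le_one fun q => abs_mul_le_one (hF _ _) (hF _ _)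
  have hR2 : ∀ q s, R q s ^ 2 = 𝔼 p ∈ B₁, 𝔼 p' ∈ B₁,
      (F p q * F p' q) * (a p (s - p) * a p' (s - p')) := fun q s => by
    rw [hR, sq_avg]
    exact expect_congr rfl fun p _ => expect_congr rfl fun p' _ => by ring
  have swap4 : ∀ k : G → G → G → G → ℝ, 𝔼 q ∈ B₁, 𝔼 s ∈ B₂, 𝔼 p ∈ B₁, 𝔼 p' ∈ B₁, k q s p p'
      = 𝔼 p ∈ B₁, 𝔼 p' ∈ B₁, 𝔼 q ∈ B₁, 𝔼 s ∈ B₂, k q s p p' := by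
    intro k
    have e1 : ∀ q, 𝔼 s ∈ B₂, 𝔼 p ∈ B₁, 𝔼 p' ∈ B₁, k q s p p'
        = 𝔼 p ∈ B₁, 𝔼 p' ∈ B₁, 𝔼 s ∈ B₂, k q s p p' := fun q => by
      rw [expect_comm]
      exact expect_congr rfl fun p _ => expect_comm _ _ _
    simp only [e1]
    rw [expect_comm]
    exact expect_congr rfl fun p _ => expect_comm _ _ _
  have hQa : 𝔼 q ∈ B₁, 𝔼 s ∈ B₂, (e₁ (s - q) - α₁) * R q s ^ 2 ≤ c₁ := by
    simp only [hR2, mul_expect]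
    rw [swap4]
    refine avg_le hc₁0 fun p => avg_le hc₁0 fun p' => ?_
    have := (abs_le.1 (hc₁ (fun q => F p q * F p' q) (fun s => a p (s - p) * a p' (s - p'))
      (fun q => abs_mul_le_one (hF _ _) (hF _ _))
      (fun s => abs_mul_le_one (haabs _ _) (haabs _ _)))).2
    simpa only [mul_assoc] using this
  -- `e₂ (s - p) * e₂ (s - p')` is replaced by `α₂ ^ 2`, one factor at a time; the sign of the
  -- difference is absorbed into the bounded test function
  have hW2 : 𝔼 p ∈ B₁, 𝔼 p' ∈ B₁, |W p p' - α₂ ^ 2| ≤ 2 * c₂ := by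
    set σ : G → G → ℝ := fun p p' => SignType.sign (W p p' - α₂ ^ 2) with hσ
    have hσ1 : ∀ p p', |σ p p'| ≤ 1 := fun p p' => by
      rw [hσ]
      rcases SignType.trichotomy (SignType.sign (W p p' - α₂ ^ 2)) with h | h | h <;> simp [h]
    have e : ∀ p p', |W p p' - α₂ ^ 2| = 𝔼 s ∈ B₂, (e₂ (s - p) - α₂) * σ p p' * e₂ (s - p')
        + 𝔼 s ∈ B₂, (e₂ (s - p') - α₂) * σ p p' * α₂ := fun p p' => by
      have e0 : W p p' - α₂ ^ 2 = 𝔼 s ∈ B₂, (e₂ (s - p) * e₂ (s - p') - α₂ ^ 2) := by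
        rw [expect_sub_distrib, expect_const hne₂]
      rw [← sign_mul_self]
      change σ p p' * _ = _
      rw [e0, mul_expect, ← expect_add_distrib]
      exact expect_congr rfl fun s _ => by ring
    simp only [e, expect_add_distrib]
    have k1 : 𝔼 p ∈ B₁, 𝔼 p' ∈ B₁, 𝔼 s ∈ B₂, (e₂ (s - p) - α₂) * σ p p' * e₂ (s - p') ≤ c₂ := by
      rw [expect_comm]
      exact avg_le hc₂0 fun p' => (abs_le.1 (hc₂ (fun p => σ p p') (fun s => e₂ (s - p'))
        (fun p => hσ1 _ _) (fun s => habs₂ _))).2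
    have k2 : 𝔼 p ∈ B₁, 𝔼 p' ∈ B₁, 𝔼 s ∈ B₂, (e₂ (s - p') - α₂) * σ p p' * α₂ ≤ c₂ :=
      avg_le hc₂0 fun p => (abs_le.1 (hc₂ (fun p' => σ p p') (fun s => α₂)
        (fun p => hσ1 _ _) (fun s => by rw [abs_of_nonneg hα₂]; exact hα₂'))).2
    linarith
  have hbox1 := box_le_one B₁ F hF
  have hsq1 : √(box B₁ F) ≤ 1 := Real.sqrt_le_one.2 hbox1
  have hsq0 : 0 ≤ √(box B₁ F) := Real.sqrt_nonneg _
  -- the second Cauchy-Schwarz, in `(p, p')`, keeping the weight `e₁ p * e₁ p'`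
  have hCS : 𝔼 p ∈ B₁, 𝔼 p' ∈ B₁, e₁ p * e₁ p' * |U p p'| ≤ α₁ * √(box B₁ F) + d₁ := by
    have h1 := cs_two B₁ B₁ (fun p p' => e₁ p * e₁ p') (fun p p' => |U p p'|)
    simp only [sq_abs] at h1
    have h2 : 𝔼 p ∈ B₁, 𝔼 p' ∈ B₁, (e₁ p * e₁ p') ^ 2 ≤ (𝔼 p ∈ B₁, e₁ p) ^ 2 := by
      rw [sq_avg]
      refine avg_mono fun p => avg_mono fun p' => ?_
      have h0 := mul_nonneg (he₁ p).1 (he₁ p').1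
      have h1 := mul_le_one₀ (he₁ p).2 (he₁ p').1 (he₁ p').2
      nlinarith
    have h3 : 𝔼 p ∈ B₁, 𝔼 p' ∈ B₁, U p p' ^ 2 = box B₁ F := rfl
    rw [h3] at h1
    have hE0 : 0 ≤ 𝔼 p ∈ B₁, e₁ p := avg_nonneg fun p => (he₁ p).1
    have h4 : 𝔼 p ∈ B₁, 𝔼 p' ∈ B₁, e₁ p * e₁ p' * |U p p'| ≤ (𝔼 p ∈ B₁, e₁ p) * √(box B₁ F) := by
      refine le_of_sq_le_sq ?_ (by positivity)
      rw [mul_pow, Real.sq_sqrt (box_nonneg _ _)]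
      exact h1.trans (mul_le_mul_of_nonneg_right h2 (box_nonneg _ _))
    have h5 := mul_le_mul_of_nonneg_right hm₁ hsq0
    nlinarith
  have hRR : 𝔼 q ∈ B₁, 𝔼 s ∈ B₂, R q s ^ 2 ≤ α₂ ^ 2 * (α₁ * √(box B₁ F) + d₁) + 2 * c₂ := by
    simp only [hR2]
    rw [swap4]
    have e : ∀ p p', 𝔼 q ∈ B₁, 𝔼 s ∈ B₂, F p q * F p' q * (a p (s - p) * a p' (s - p'))
        ≤ α₂ ^ 2 * (e₁ p * e₁ p' * |U p p'|) + |W p p' - α₂ ^ 2| := fun p p' => by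
      have e1 : 𝔼 q ∈ B₁, 𝔼 s ∈ B₂, F p q * F p' q * (a p (s - p) * a p' (s - p'))
          = U p p' * V p p' := (expect_mul_expect _ _ _ _).symm
      have hV0 : 0 ≤ V p p' := avg_nonneg fun s => mul_nonneg (ha _ _).1 (ha _ _).1
      have hee := mul_nonneg (he₁ p).1 (he₁ p').1
      have hee1 := mul_le_one₀ (he₁ p).2 (he₁ p').1 (he₁ p').2
      have hVW : V p p' ≤ e₁ p * e₁ p' * W p p' := by
        rw [hV, hW, mul_expect]
        refine avg_mono fun s => ?_
        refine (mul_le_mul (ha _ _).2 (ha _ _).2 (ha _ _).1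
          (mul_nonneg (he₁ _).1 (he₂ _).1)).trans (le_of_eq (by ring))
      rw [e1]
      calc U p p' * V p p' ≤ |U p p'| * V p p' := mul_le_mul_of_nonneg_right (le_abs_self _) hV0
        _ ≤ |U p p'| * (e₁ p * e₁ p' * W p p') := mul_le_mul_of_nonneg_left hVW (abs_nonneg _)
        _ = α₂ ^ 2 * (e₁ p * e₁ p' * |U p p'|)
            + (|U p p'| * (e₁ p * e₁ p')) * (W p p' - α₂ ^ 2) := by ring
        _ ≤ _ := by
            have k1 : |U p p'| * (e₁ p * e₁ p') ≤ 1 := mul_le_one₀ (hU1 _ _) hee hee1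
            have k0 : 0 ≤ |U p p'| * (e₁ p * e₁ p') := mul_nonneg (abs_nonneg _) hee
            have k2 := le_abs_self (W p p' - α₂ ^ 2)
            have k3 := abs_nonneg (W p p' - α₂ ^ 2)
            nlinarith
    refine (avg_mono fun p => avg_mono fun p' => e p p').trans ?_
    simp only [expect_add_distrib, ← mul_expect]
    have := mul_le_mul_of_nonneg_left hCS (sq_nonneg α₂)
    linarith
  have hQ2 : Q ≤ c₁ + α₁ * (α₂ ^ 2 * (α₁ * √(box B₁ F) + d₁) + 2 * c₂) := by
    have h1 : Q ≤ 𝔼 q ∈ B₁, 𝔼 s ∈ B₂, ((e₁ (s - q) - α₁) * R q s ^ 2 + α₁ * R q s ^ 2) := by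
      refine avg_mono fun q => avg_mono fun s => ?_
      have := mul_le_mul_of_nonneg_left (he₂ q).2 (mul_nonneg (he₁ (s - q)).1 (sq_nonneg (R q s)))
      linarith
    simp only [expect_add_distrib, ← mul_expect] at h1
    have := mul_le_mul_of_nonneg_left hRR hα₁
    linarith
  have hQ3 : Q ≤ α₁ ^ 2 * α₂ ^ 2 * √(box B₁ F) + (c₁ + d₁ + 2 * c₂) := by
    have k1 : α₁ * α₂ ^ 2 * d₁ ≤ d₁ := by
      have : α₁ * α₂ ^ 2 ≤ 1 := mul_le_one₀ hα₁' (sq_nonneg _) (pow_le_one₀ hα₂ hα₂')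
      nlinarith
    have k2 : α₁ * c₂ ≤ c₂ := by nlinarith
    nlinarith
  have hαα : 0 ≤ α₁ * α₂ := mul_nonneg hα₁ hα₂
  have hαα1 : α₁ * α₂ ≤ 1 := mul_le_one₀ hα₁' hα₂ hα₂'
  calc _ ≤ P * Q := hPQ
    _ ≤ (α₁ * α₂ + d₂ + c₁) * Q := mul_le_mul_of_nonneg_right hP1 hQ0
    _ ≤ α₁ * α₂ * Q + (d₂ + c₁) := by nlinarith
    _ ≤ α₁ * α₂ * (α₁ ^ 2 * α₂ ^ 2 * √(box B₁ F) + (c₁ + d₁ + 2 * c₂)) + (d₂ + c₁) := by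
        linarith [mul_le_mul_of_nonneg_left hQ3 hαα]
    _ ≤ _ := by nlinarith

/-! ### Rectangles correlating with a function of large box norm -/

/-- The indicator function of a finset. -/
def ind (S : Finset G) (x : G) : ℝ := if x ∈ S then 1 else 0

/-- A function taking only the values `0` and `1`. -/
def IsInd (f : G → ℝ) : Prop := ∀ x, f x = 0 ∨ f x = 1

lemma ind_isInd (S : Finset G) : IsInd (ind S) := fun x => by
  unfold ind; split_ifs <;> simp

lemma IsInd.exists_eq {f : G → ℝ} (hf : IsInd f) : ∃ S : Finset G, f = ind S := by
  classical
  refine ⟨univ.filter fun x => f x = 1, funext fun x => ?_⟩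
  unfold ind
  rcases hf x with h | h <;> simp [h]

lemma ind_compl (S : Finset G) (x : G) : ind Sᶜ x = 1 - ind S x := by
  unfold ind; by_cases h : x ∈ S <;> simp [h]

lemma IsInd.bounds {f : G → ℝ} (hf : IsInd f) (x : G) : 0 ≤ f x ∧ f x ≤ 1 := by
  rcases hf x with h | h <;> simp [h]

/-- A balanced function with large box norm has a rectangle on which it is biased upwards. -/
lemma box_increment {B : Finset G} (e₁ e₂ : G → ℝ) (a : G → G → ℝ) {σ : ℝ}
    (he₁ : IsInd e₁) (he₂ : IsInd e₂) (ha : ∀ x y, a x y = 0 ∨ a x y = 1)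
    (hae : ∀ x y, a x y ≤ e₁ x * e₂ y) (hσ0 : 0 ≤ σ) (hσ1 : σ ≤ 1) :
    ∃ S₁ S₂ : Finset G,
      0 ≤ 3 * (𝔼 x ∈ B, 𝔼 y ∈ B, (a x y - σ * (e₁ x * e₂ y)) * (ind S₁ x * ind S₂ y))
          - 𝔼 x ∈ B, 𝔼 y ∈ B, (a x y - σ * (e₁ x * e₂ y)) ∧
      box B (fun x y => a x y - σ * (e₁ x * e₂ y)) ≤
      4 * ((𝔼 x ∈ B, e₁ x) * 𝔼 y ∈ B, e₂ y) *
        (3 * (𝔼 x ∈ B, 𝔼 y ∈ B, (a x y - σ * (e₁ x * e₂ y)) * (ind S₁ x * ind S₂ y))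
          - 𝔼 x ∈ B, 𝔼 y ∈ B, (a x y - σ * (e₁ x * e₂ y))) := by
  set f : G → G → ℝ := fun x y => a x y - σ * (e₁ x * e₂ y) with hf
  set I : (G → ℝ) → (G → ℝ) → ℝ := fun ψ₁ ψ₂ => 𝔼 x ∈ B, 𝔼 y ∈ B, f x y * (ψ₁ x * ψ₂ y) with hI
  -- the rectangle on which the total bias is largest
  obtain ⟨⟨S₁, S₂⟩, hmax⟩ := Finite.exists_max fun S : Finset G × Finset G => I (ind S.1) (ind S.2)
  refine ⟨S₁, S₂, ?_⟩
  set J := I (ind S₁) (ind S₂) with hJ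
  set μ := 𝔼 x ∈ B, 𝔼 y ∈ B, f x y with hμ
  have hμI : μ = I (ind univ) (ind univ) := by
    simp [hμ, hI, ind]
  have hJμ : μ ≤ J := hμI ▸ hmax (univ, univ)
  -- a rectangle and its three complementary ones have total bias `μ`, and each of them has bias at
  -- most `J`, so each of them has bias at least `μ - 3 * J`
  have key : ∀ ψ₁ ψ₂, IsInd ψ₁ → IsInd ψ₂ → |I ψ₁ ψ₂| ≤ 3 * J - μ := by
    intro ψ₁ ψ₂ h₁ h₂
    obtain ⟨T₁, rfl⟩ := h₁.exists_eq
    obtain ⟨T₂, rfl⟩ := h₂.exists_eq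
    have k0 := hmax (T₁, T₂)
    have k1 := hmax (T₁ᶜ, T₂)
    have k2 := hmax (T₁, T₂ᶜ)
    have k3 := hmax (T₁ᶜ, T₂ᶜ)
    have e : I (ind T₁) (ind T₂) + I (ind T₁ᶜ) (ind T₂) + I (ind T₁) (ind T₂ᶜ)
        + I (ind T₁ᶜ) (ind T₂ᶜ) = μ := by
      simp only [hI, hμ, ← expect_add_distrib, ind_compl]
      exact expect_congr rfl fun x _ => expect_congr rfl fun y _ => by ring
    rw [abs_le]
    simp only at k0 k1 k2 k3
    constructor <;> linarith
  have hfa : ∀ x y, |f x y| ≤ e₁ x * e₂ y := by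
    intro x y
    have h0 := (he₁.bounds x).1
    have h1 := (he₂.bounds y).1
    have h2 := mul_nonneg h0 h1
    have h3 := hae x y
    have h4 : 0 ≤ a x y := by rcases ha x y with h | h <;> simp [h]
    rw [abs_le]; simp only [hf]
    constructor <;> nlinarith
  -- for fixed `(p', q')` the product `f p' q * f p q'` is a combination of four products of
  -- indicator functions with coefficients in `[-1, 1]`
  have expand : ∀ p' q', |𝔼 p ∈ B, 𝔼 q ∈ B, f p q * f p' q * f p q'| ≤ 4 * (3 * J - μ) := by
    intro p' q'
    set s := σ * e₁ p' with hs
    set t := σ * e₂ q' with ht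
    have hs0 : 0 ≤ s := mul_nonneg hσ0 (he₁.bounds _).1
    have ht0 : 0 ≤ t := mul_nonneg hσ0 (he₂.bounds _).1
    have hs1 : s ≤ 1 := mul_le_one₀ hσ1 (he₁.bounds _).1 (he₁.bounds _).2
    have ht1 : t ≤ 1 := mul_le_one₀ hσ1 (he₂.bounds _).1 (he₂.bounds _).2
    have e : 𝔼 p ∈ B, 𝔼 q ∈ B, f p q * f p' q * f p q' =
        I (fun p => a p q') (fun q => a p' q) - t * I e₁ (fun q => a p' q)
          - s * I (fun p => a p q') e₂ + (s * t) * I e₁ e₂ := by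
      simp only [hI, mul_expect, ← expect_add_distrib, ← expect_sub_distrib]
      refine expect_congr rfl fun p _ => expect_congr rfl fun q _ => ?_
      simp only [hf, hs, ht]; ring
    have k1 := key _ _ (fun p => ha p q') (fun q => ha p' q)
    have k2 := key _ _ he₁ (fun q => ha p' q)
    have k3 := key _ _ (fun p => ha p q') he₂
    have k4 := key _ _ he₁ he₂
    have hK : 0 ≤ 3 * J - μ := (abs_nonneg _).trans k1
    have aux : ∀ c x : ℝ, 0 ≤ c → c ≤ 1 → |x| ≤ 3 * J - μ → |c * x| ≤ 3 * J - μ := by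
      intro c x h0 h1 h2
      rw [abs_mul, abs_of_nonneg h0]
      nlinarith [abs_nonneg x]
    have k2' := aux t _ ht0 ht1 k2
    have k3' := aux s _ hs0 hs1 k3
    have k4' := aux (s * t) _ (mul_nonneg hs0 ht0) (mul_le_one₀ hs1 ht0 ht1) k4
    rw [e]
    rw [abs_le] at *
    constructor <;> linarith
  have hbox : box B f = 𝔼 p' ∈ B, 𝔼 q' ∈ B, f p' q' * 𝔼 p ∈ B, 𝔼 q ∈ B, f p q * f p' q * f p q' := by
    rw [box, expect_comm]
    refine expect_congr rfl fun p' _ => ?_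
    simp only [sq_avg, mul_expect]
    rw [expect_comm]
    have e : ∀ p, 𝔼 q ∈ B, 𝔼 q' ∈ B, f p q * f p' q * (f p q' * f p' q')
        = 𝔼 q' ∈ B, 𝔼 q ∈ B, f p q * f p' q * (f p q' * f p' q') := fun p => expect_comm _ _ _
    rw [expect_comm]
    simp only [e]
    rw [expect_comm]
    exact expect_congr rfl fun q' _ => expect_congr rfl fun p _ => expect_congr rfl
      fun q _ => by ring
  refine ⟨(abs_nonneg _).trans (key _ _ he₁ he₂), ?_⟩
  rw [hbox]
  have : 𝔼 p' ∈ B, 𝔼 q' ∈ B, f p' q' * 𝔼 p ∈ B, 𝔼 q ∈ B, f p q * f p' q * f p q'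
      ≤ 𝔼 p' ∈ B, 𝔼 q' ∈ B, (e₁ p' * e₂ q') * (4 * (3 * J - μ)) := by
    refine avg_mono fun p' => avg_mono fun q' => ?_
    refine (le_abs_self _).trans ?_
    rw [abs_mul]
    exact mul_le_mul (hfa _ _) (expand _ _) (abs_nonneg _)
      (mul_nonneg (he₁.bounds _).1 (he₂.bounds _).1)
  refine this.trans (le_of_eq ?_)
  rw [expect_mul_expect]
  simp only [← expect_mul]
  ring

/-! ### Averages over a cell and over its translates -/

lemma Small.trans {ε ε' : ℝ} {B B' B'' : Finset G} (h : Small ε B B') (h' : Small ε' B' B'') :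
    Small ε B B'' where
  zero := h'.zero
  sub := h'.sub.trans h.sub
  card := by
    refine le_trans ?_ h.card
    exact_mod_cast Finset.card_le_card (Finset.add_subset_add_left h'.sub)

lemma Small.shift_fst {ε : ℝ} {B B' : Finset G} (h : Small ε B B') {b : G}
    (hb : b ∈ B') (F : G → G → ℝ) (hF : ∀ x y, |F x y| ≤ 1) :
    |𝔼 x ∈ B, 𝔼 y ∈ B, F (x + b) y - 𝔼 x ∈ B, 𝔼 y ∈ B, F x y| ≤ 2 * ε :=
  h.shift hb (fun x => 𝔼 y ∈ B, F x y) fun x => avg_abs_le zero_le_one fun y => hF x y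

lemma Small.shift_snd {ε : ℝ} (hε : 0 ≤ ε) {B B' : Finset G} (h : Small ε B B') {b : G}
    (hb : b ∈ B') (F : G → G → ℝ) (hF : ∀ x y, |F x y| ≤ 1) :
    |𝔼 x ∈ B, 𝔼 y ∈ B, F x (y + b) - 𝔼 x ∈ B, 𝔼 y ∈ B, F x y| ≤ 2 * ε := by
  rw [← expect_sub_distrib]
  exact avg_abs_le (by positivity) fun x => h.shift hb (F x) (hF x)

lemma Small.shift_both {ε : ℝ} (hε : 0 ≤ ε) {B B' : Finset G} (h : Small ε B B') {b c : G}
    (hb : b ∈ B') (hc : c ∈ B') (F : G → G → ℝ) (hF : ∀ x y, |F x y| ≤ 1) :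
    |𝔼 x ∈ B, 𝔼 y ∈ B, F (x + b) (y + c) - 𝔼 x ∈ B, 𝔼 y ∈ B, F x y| ≤ 4 * ε := by
  have h1 := h.shift_fst hb (fun x y => F x (y + c)) fun x y => hF _ _
  have h2 := h.shift_snd hε hc F hF
  rw [abs_le] at *
  constructor <;> linarith

/-- If every value of a function is within `c` of `k` then so is its average. -/
lemma avg_near {ι : Type*} {s : Finset ι} (hs : s.Nonempty) {f : ι → ℝ} {k c : ℝ} (hc : 0 ≤ c)
    (h : ∀ i ∈ s, |f i - k| ≤ c) : |𝔼 i ∈ s, f i - k| ≤ c := by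
  rw [← expect_const hs k, ← expect_sub_distrib]
  exact abs_expect_le_of s _ hc h

lemma Small.ne {ε : ℝ} {B B' : Finset G} (h : Small ε B B') : B'.Nonempty := ⟨0, h.zero⟩

lemma Small.shift_both_avg {ε : ℝ} (hε : 0 ≤ ε) {B B' : Finset G} (h : Small ε B B')
    (F : G → G → ℝ) (hF : ∀ x y, |F x y| ≤ 1) :
    |𝔼 x ∈ B, 𝔼 y ∈ B, 𝔼 b ∈ B', 𝔼 c ∈ B', F (x + b) (y + c) - 𝔼 x ∈ B, 𝔼 y ∈ B, F x y|
      ≤ 4 * ε := by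
  have e : 𝔼 x ∈ B, 𝔼 y ∈ B, 𝔼 b ∈ B', 𝔼 c ∈ B', F (x + b) (y + c)
      = 𝔼 b ∈ B', 𝔼 c ∈ B', 𝔼 x ∈ B, 𝔼 y ∈ B, F (x + b) (y + c) := by
    have e1 : ∀ x, 𝔼 y ∈ B, 𝔼 b ∈ B', 𝔼 c ∈ B', F (x + b) (y + c)
        = 𝔼 b ∈ B', 𝔼 c ∈ B', 𝔼 y ∈ B, F (x + b) (y + c) := fun x => by
      rw [expect_comm]
      exact expect_congr rfl fun b _ => expect_comm _ _ _
    simp only [e1]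
    rw [expect_comm]
    exact expect_congr rfl fun b _ => expect_comm _ _ _
  rw [e]
  exact avg_near h.ne (by positivity) fun b hb => avg_near h.ne (by positivity) fun c hc =>
    h.shift_both hε hb hc F hF

/-- Averaging over the subcells `(x + s + B₃, y + s' + B₃)`, where `B₃` may depend on `(x, y)`,
returns the average over the cell up to `8 * ε`. -/
lemma avg_six {ε : ℝ} (hε : 0 ≤ ε) {B₀ B₂ : Finset G} (B₃ : G → G → Finset G)
    (h₀ : Small ε B₀ B₂) (h₂ : ∀ x y, Small ε B₂ (B₃ x y))
    (F : G → G → ℝ) (hF : ∀ x y, |F x y| ≤ 1) :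
    |𝔼 x ∈ B₀, 𝔼 y ∈ B₀, 𝔼 s ∈ B₂, 𝔼 s' ∈ B₂, 𝔼 b ∈ B₃ x y, 𝔼 b' ∈ B₃ x y,
      F (x + s + b) (y + s' + b') - 𝔼 x ∈ B₀, 𝔼 y ∈ B₀, F x y| ≤ 8 * ε := by
  have h1 := h₀.shift_both_avg hε F hF
  have h2 : |𝔼 x ∈ B₀, 𝔼 y ∈ B₀, 𝔼 s ∈ B₂, 𝔼 s' ∈ B₂, 𝔼 b ∈ B₃ x y, 𝔼 b' ∈ B₃ x y,
      F (x + s + b) (y + s' + b') - 𝔼 x ∈ B₀, 𝔼 y ∈ B₀, 𝔼 s ∈ B₂, 𝔼 s' ∈ B₂,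
        F (x + s) (y + s')| ≤ 4 * ε := by
    simp only [← expect_sub_distrib]
    refine avg_abs_le (by positivity) fun x => avg_abs_le (by positivity) fun y => ?_
    have := (h₂ x y).shift_both_avg hε (fun p q => F (x + p) (y + q)) fun _ _ => hF _ _
    simp only [expect_sub_distrib]
    simpa only [add_assoc] using this
  rw [abs_le] at *
  constructor <;> linarith

/-! ### Stability of the energy forces Fourier uniformity -/

/-- If passing to the subcells `(x + s + B₃, y + s' + B₃)` never increases the energy by more than
`ε`, the densities of `e₁`, `e₂` on most subcells are close to those on the cell. -/
lemma variance {ε κ : ℝ} (hε : 0 ≤ ε) (hκ : 0 < κ) (hκ1 : κ ≤ 1) {B₀ B₂ : Finset G}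
    (hne : B₀.Nonempty)
    (B₃ : G → G → Finset G) (h₀ : Small ε B₀ B₂) (h₂ : ∀ x y, Small ε B₂ (B₃ x y))
    (F : G → G → ℝ) (hF : ∀ x y, |F x y| ≤ 1) (e₁ e₂ : G → ℝ)
    (he₁ : ∀ x, |e₁ x| ≤ 1) (he₂ : ∀ x, |e₂ x| ≤ 1) {α₁ α₂ h : ℝ}
    (hα₁ : α₁ = 𝔼 x ∈ B₀, e₁ x) (hα₂ : α₂ = 𝔼 x ∈ B₀, e₂ x) (hh : h = 𝔼 x ∈ B₀, 𝔼 y ∈ B₀, F x y)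
    (hst : ∀ x y s s', 𝔼 b ∈ B₃ x y, 𝔼 b' ∈ B₃ x y, F (x + s + b) (y + s' + b')
      + κ * ((𝔼 b ∈ B₃ x y, e₁ (x + s + b)) ^ 2 + (𝔼 b ∈ B₃ x y, e₂ (y + s' + b)) ^ 2)
      ≤ h + κ * (α₁ ^ 2 + α₂ ^ 2) + ε) :
    𝔼 x ∈ B₀, 𝔼 y ∈ B₀, 𝔼 s ∈ B₂, 𝔼 s' ∈ B₂, ((𝔼 b ∈ B₃ x y, e₁ (x + s + b) - α₁) ^ 2
      + (𝔼 b ∈ B₃ x y, e₂ (y + s' + b) - α₂) ^ 2) ≤ 41 * ε / κ := by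
  have hα₁1 : |α₁| ≤ 1 := hα₁ ▸ avg_abs_le zero_le_one he₁
  have hα₂1 : |α₂| ≤ 1 := hα₂ ▸ avg_abs_le zero_le_one he₂
  have k0 := avg_six hε B₃ h₀ h₂ F hF
  have k1 := avg_six hε B₃ h₀ h₂ (fun x _ => e₁ x) fun x _ => he₁ x
  have k2 := avg_six hε B₃ h₀ h₂ (fun _ y => e₂ y) fun _ y => he₂ y
  simp only [expect_const hne, expect_const (h₂ _ _).ne] at k1 k2
  rw [← hα₁] at k1
  rw [← hα₂] at k2
  rw [← hh] at k0
  set A₁ : G → G → G → ℝ := fun x y s => 𝔼 b ∈ B₃ x y, e₁ (x + s + b) with hA₁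
  set A₂ : G → G → G → ℝ := fun x y s' => 𝔼 b ∈ B₃ x y, e₂ (y + s' + b) with hA₂
  set H : G → G → G → G → ℝ := fun x y s s' =>
    𝔼 b ∈ B₃ x y, 𝔼 b' ∈ B₃ x y, F (x + s + b) (y + s' + b') with hH
  -- expanding the squares turns the energy bound into one linear in `H`, `A₁`, `A₂`, whose averages
  -- are known up to `O(ε)`
  have pt : ∀ x y s s', κ * ((A₁ x y s - α₁) ^ 2 + (A₂ x y s' - α₂) ^ 2)
      ≤ (h + ε + 2 * κ * α₁ * α₁ + 2 * κ * α₂ * α₂) -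
        (H x y s s' + 2 * κ * α₁ * A₁ x y s + 2 * κ * α₂ * A₂ x y s') := fun x y s s' => by
    have := hst x y s s'
    simp only [hH, hA₁, hA₂] at this ⊢
    nlinarith
  have av : 𝔼 x ∈ B₀, 𝔼 y ∈ B₀, 𝔼 s ∈ B₂, 𝔼 s' ∈ B₂,
      κ * ((A₁ x y s - α₁) ^ 2 + (A₂ x y s' - α₂) ^ 2)
      ≤ 𝔼 x ∈ B₀, 𝔼 y ∈ B₀, 𝔼 s ∈ B₂, 𝔼 s' ∈ B₂,
        ((h + ε + 2 * κ * α₁ * α₁ + 2 * κ * α₂ * α₂) -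
        (H x y s s' + 2 * κ * α₁ * A₁ x y s + 2 * κ * α₂ * A₂ x y s')) :=
    avg_mono fun x => avg_mono fun y => avg_mono fun s => avg_mono fun s' => pt x y s s'
  simp only [expect_sub_distrib, expect_const hne, expect_const h₀.ne] at av
  simp only [← mul_expect] at av
  simp only [expect_add_distrib, ← mul_expect, expect_const h₀.ne] at av
  simp only [expect_const h₀.ne] at k1 k2
  simp only [expect_add_distrib]
  rw [le_div_iff₀ hκ]
  set X₁ := 𝔼 x ∈ B₀, 𝔼 y ∈ B₀, 𝔼 s ∈ B₂, A₁ x y s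
  set X₂ := 𝔼 x ∈ B₀, 𝔼 y ∈ B₀, 𝔼 s ∈ B₂, A₂ x y s
  set X₀ := 𝔼 x ∈ B₀, 𝔼 y ∈ B₀, 𝔼 s ∈ B₂, 𝔼 s' ∈ B₂, H x y s s'
  have m1 : |κ * α₁ * (X₁ - α₁)| ≤ 8 * ε := by
    rw [abs_mul]
    refine (mul_le_mul (abs_mul_le_one (abs_le.2 ⟨by linarith, hκ1⟩) hα₁1) k1 (abs_nonneg _)
      zero_le_one).trans (by linarith)
  have m2 : |κ * α₂ * (X₂ - α₂)| ≤ 8 * ε := by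
    rw [abs_mul]
    refine (mul_le_mul (abs_mul_le_one (abs_le.2 ⟨by linarith, hκ1⟩) hα₂1) k2 (abs_nonneg _)
      zero_le_one).trans (by linarith)
  rw [abs_le] at m1 m2 k0
  simp only [expect_const h₀.ne]
  nlinarith

/-- On a Bohr-type set `B₃ ⊆ B₂` on which the extremal character is nearly trivial, `phi` is
controlled by the fluctuation of local averages. -/
lemma phi_le_fluct {ε : ℝ} (hε : 0 ≤ ε) {B₂ : Finset G} (F : G → ℝ) (hF : ∀ x, |F x| ≤ 1) (x : G) :
    ∃ γ : AddChar G ℂ, ∀ B₃, Small ε B₂ B₃ → (∀ b ∈ B₃, ‖γ b - 1‖ ≤ ε) →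
      phi B₂ F x ≤ 3 * ε + 𝔼 s ∈ B₂, |𝔼 b ∈ B₃, F (x + s + b)| := by
  obtain ⟨γ, hγ⟩ := exists_phi B₂ F x
  refine ⟨γ, fun B₃ hB hb => ?_⟩
  set z : ℂ := ∑ s ∈ B₂, (F (x + s) : ℂ) * γ s with hz
  -- multiplying by the phase `c` makes `z` real and nonnegative
  obtain ⟨c, hc, hcz⟩ : ∃ c : ℂ, ‖c‖ = 1 ∧ c * z = ‖z‖ := by
    rcases eq_or_ne z 0 with h | h
    · exact ⟨1, by simp, by simp [h]⟩
    · refine ⟨conj z / ‖z‖, ?_, ?_⟩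
      · rw [norm_div, RCLike.norm_conj, Complex.norm_real, norm_norm, div_self (norm_ne_zero_iff.2 h)]
      · rw [div_mul_eq_mul_div, Complex.conj_mul', sq, mul_div_assoc, div_self, mul_one]
        exact_mod_cast norm_ne_zero_iff.2 h
  set ω : G → ℝ := fun s => (c * γ s).re with hω
  have hω1 : ∀ s, |ω s| ≤ 1 := fun s => by
    refine (Complex.abs_re_le_norm _).trans ?_
    rw [norm_mul, hc, AddChar.norm_apply, mul_one]
  have e1 : phi B₂ F x = 𝔼 s ∈ B₂, F (x + s) * ω s := by
    rw [hγ, expect_eq_sum_div_card]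
    congr 1
    have : ‖z‖ = (c * z).re := by rw [hcz, Complex.ofReal_re]
    rw [this, hz, Finset.mul_sum, Complex.re_sum]
    refine Finset.sum_congr rfl fun s _ => ?_
    rw [show c * ((F (x + s) : ℂ) * γ s) = (F (x + s) : ℂ) * (c * γ s) by ring,
      Complex.re_ofReal_mul]
  have h1 := hB.shift_avg hε (fun s => F (x + s) * ω s) fun s => abs_mul_le_one (hF _) (hω1 _)
  have h2 : 𝔼 s ∈ B₂, 𝔼 b ∈ B₃, F (x + (s + b)) * ω (s + b)
      ≤ 𝔼 s ∈ B₂, (ε + |𝔼 b ∈ B₃, F (x + s + b)|) := by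
    refine avg_mono fun s => ?_
    have e2 : 𝔼 b ∈ B₃, F (x + (s + b)) * ω (s + b) = 𝔼 b ∈ B₃, F (x + s + b) * (ω (s + b) - ω s)
        + ω s * 𝔼 b ∈ B₃, F (x + s + b) := by
      rw [mul_expect, ← expect_add_distrib]
      refine expect_congr rfl fun b _ => ?_
      rw [add_assoc]; ring
    rw [e2]
    refine add_le_add ?_ ?_
    · refine (le_abs_self _).trans (abs_expect_le_of _ _ hε fun b hb' => ?_)
      rw [abs_mul]
      have : |ω (s + b) - ω s| ≤ ε := by
        have e3 : ω (s + b) - ω s = (c * γ s * (γ b - 1)).re := by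
          simp only [hω, AddChar.map_add_eq_mul, ← Complex.sub_re]
          congr 1; ring
        rw [e3]
        refine (Complex.abs_re_le_norm _).trans ?_
        rw [norm_mul, norm_mul, hc, AddChar.norm_apply, mul_one, one_mul]
        exact hb b hb'
      exact (mul_le_mul (hF _) this (abs_nonneg _) zero_le_one).trans (by linarith)
    · refine (le_abs_self _).trans ?_
      rw [abs_mul]
      exact mul_le_of_le_one_left (abs_nonneg _) (hω1 s)
  rw [expect_add_distrib] at h2
  have h3 : 𝔼 s ∈ B₂, ε ≤ ε := avg_le hε fun _ => le_rfl
  rw [e1]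
  rw [abs_le] at h1
  linarith

/-- The quantity driving the increment: the average of `F` on the cell `(t + B) × (u + B)` plus
`κ` times the sum of the squared densities of `e₁` and `e₂` there. -/
def energy (κ : ℝ) (F : G → G → ℝ) (e₁ e₂ : G → ℝ) (t u : G) (B : Finset G) : ℝ :=
  𝔼 p ∈ B, 𝔼 q ∈ B, F (t + p) (u + q)
    + κ * ((𝔼 p ∈ B, e₁ (t + p)) ^ 2 + (𝔼 q ∈ B, e₂ (u + q)) ^ 2)

/-- If the energy of the cell cannot be increased by more than `ε`, the local Fourier coefficients
of `e₁ - α₁` and `e₂ - α₂` are small on average. -/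
lemma phi_average {ε κ : ℝ} (hε : 0 ≤ ε) (hκ : 0 < κ) (hκ1 : κ ≤ 1) {B₀ B₂ : Finset G}
    (hne : B₀.Nonempty) (h₀ : Small ε B₀ B₂) {P : Finset G → Prop}
    (href : ∀ γ : AddChar G ℂ, ∃ B₃, P B₃ ∧ Small ε B₂ B₃ ∧ ∀ b ∈ B₃, ‖γ b - 1‖ ≤ ε)
    (F : G → G → ℝ) (hF : ∀ x y, |F x y| ≤ 1) (e₁ e₂ : G → ℝ)
    (he₁ : ∀ x, 0 ≤ e₁ x ∧ e₁ x ≤ 1) (he₂ : ∀ x, 0 ≤ e₂ x ∧ e₂ x ≤ 1) {α₁ α₂ : ℝ}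
    (hα₁ : α₁ = 𝔼 x ∈ B₀, e₁ x) (hα₂ : α₂ = 𝔼 x ∈ B₀, e₂ x)
    (hst : ∀ t u B, P B → energy κ F e₁ e₂ t u B ≤ energy κ F e₁ e₂ 0 0 B₀ + ε)
    {l : ℝ} (hl : 0 < l) :
    𝔼 x ∈ B₀, phi B₂ (fun z => e₁ z - α₁) x ≤ 3 * ε + l + 41 * ε / κ / l ∧
    𝔼 x ∈ B₀, phi B₂ (fun z => e₂ z - α₂) x ≤ 3 * ε + l + 41 * ε / κ / l := by
  have habs : ∀ e : G → ℝ, (∀ x, 0 ≤ e x ∧ e x ≤ 1) → ∀ x, |e x| ≤ 1 := fun e he x =>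
    abs_le.2 ⟨by linarith [(he x).1], (he x).2⟩
  have hα01 : ∀ e : G → ℝ, (∀ x, 0 ≤ e x ∧ e x ≤ 1) →
      0 ≤ 𝔼 x ∈ B₀, e x ∧ 𝔼 x ∈ B₀, e x ≤ 1 := fun e he =>
    ⟨avg_nonneg fun x => (he x).1, avg_le zero_le_one fun x => (he x).2⟩
  have hvar : ∀ B₃ : G → G → Finset G, (∀ x y, P (B₃ x y)) → (∀ x y, Small ε B₂ (B₃ x y)) →
      𝔼 x ∈ B₀, 𝔼 y ∈ B₀, 𝔼 s ∈ B₂, 𝔼 s' ∈ B₂, ((𝔼 b ∈ B₃ x y, e₁ (x + s + b) - α₁) ^ 2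
      + (𝔼 b ∈ B₃ x y, e₂ (y + s' + b) - α₂) ^ 2) ≤ 41 * ε / κ := fun B₃ hP hS => by
    refine variance hε hκ hκ1 hne B₃ h₀ hS F hF e₁ e₂ (habs _ he₁) (habs _ he₂) hα₁ hα₂ rfl
      fun x y s s' => ?_
    have := hst (x + s) (y + s') (B₃ x y) (hP x y)
    simpa only [energy, zero_add, ← hα₁, ← hα₂] using this
  have hpt : ∀ e : G → ℝ, (∀ x, 0 ≤ e x ∧ e x ≤ 1) → ∀ α : ℝ, 0 ≤ α ∧ α ≤ 1 → ∀ x,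
      ∃ B₃, P B₃ ∧ Small ε B₂ B₃ ∧ phi B₂ (fun z => e z - α) x
        ≤ 3 * ε + l + (𝔼 s ∈ B₂, (𝔼 b ∈ B₃, e (x + s + b) - α) ^ 2) / l := by
    intro e he α hα x
    obtain ⟨γ, hγ⟩ := phi_le_fluct hε (B₂ := B₂) (fun z => e z - α) (fun z => abs_le.2
      ⟨by linarith [(he z).1], by linarith [(he z).2]⟩) x
    obtain ⟨B₃, hP, hS, hb⟩ := href γ
    refine ⟨B₃, hP, hS, (hγ B₃ hS hb).trans ?_⟩
    rw [add_assoc]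
    refine add_le_add le_rfl ?_
    rw [expect_div, show l + 𝔼 s ∈ B₂, (𝔼 b ∈ B₃, e (x + s + b) - α) ^ 2 / l
      = 𝔼 s ∈ B₂, (l + (𝔼 b ∈ B₃, e (x + s + b) - α) ^ 2 / l) by
        rw [expect_add_distrib, expect_const h₀.ne]]
    refine avg_mono fun s => ?_
    rw [expect_sub_distrib, expect_const hS.ne]
    set y := 𝔼 b ∈ B₃, e (x + s + b) - α
    have h1 : |y| * l ≤ l * l + y ^ 2 := by
      rw [← sq_abs y]
      nlinarith [abs_nonneg y, sq_nonneg (|y| - l)]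
    rw [← sub_nonneg]
    have h2 : l + y ^ 2 / l - |y| = (l * l + y ^ 2 - |y| * l) / l := by
      field_simp
    rw [h2]
    exact div_nonneg (by linarith) hl.le
  -- the small set carrying the extremal character of `e₁` depends on `x` only, that of `e₂` on `y`
  -- only, so the two cases are separate applications of `variance`
  constructor
  · choose B₃ hP hS hb using hpt e₁ he₁ α₁ (hα₁ ▸ hα01 e₁ he₁)
    have hv := hvar (fun x _ => B₃ x) (fun x _ => hP x) fun x _ => hS x
    refine (avg_mono fun x => hb x).trans ?_
    rw [expect_add_distrib, expect_const hne, ← expect_div]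
    refine add_le_add le_rfl (div_le_div_of_nonneg_right (le_trans ?_ hv) hl.le)
    refine avg_mono fun x => le_expect hne fun y _ => avg_mono fun s => le_expect h₀.ne fun s' _ => ?_
    exact le_add_of_nonneg_right (sq_nonneg _)
  · choose B₃ hP hS hb using hpt e₂ he₂ α₂ (hα₂ ▸ hα01 e₂ he₂)
    have hv := hvar (fun _ y => B₃ y) (fun _ y => hP y) fun _ y => hS y
    refine (avg_mono fun x => hb x).trans ?_
    rw [expect_add_distrib, expect_const hne, ← expect_div]
    refine add_le_add le_rfl (div_le_div_of_nonneg_right (le_trans ?_ hv) hl.le)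
    refine le_expect hne fun x _ => avg_mono fun y => ?_
    refine le_expect h₀.ne fun s _ => avg_mono fun s' => ?_
    exact le_add_of_nonneg_left (sq_nonneg _)

/-- An upper bound for the bilinear forms with kernel `F (x + (s - q))`, in terms of the local Fourier
coefficients of `F` near `x`. The threshold `l` is a free parameter. -/
def cst (B₁ B₂ : Finset G) (F : G → ℝ) (l : ℝ) (x : G) : ℝ :=
  l + 2 / l ^ 3 * 𝔼 q ∈ B₁, phi B₂ F (x - q)

/-- A bilinear form exceeding the threshold `l` is at most `l ^ (-3)` times its fourth power, which
is bounded by an average of local Fourier coefficients. -/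
lemma bilinear_le_cst {B₁ B₂ : Finset G} (hsym : ∀ b ∈ B₁, -b ∈ B₁)
    (hne₁ : B₁.Nonempty) (hne₂ : B₂.Nonempty)
    (hcard : ((B₁ + B₂).card : ℝ) ≤ 2 * B₁.card) (F : G → ℝ)
    (hF : ∀ x, |F x| ≤ 1) {l : ℝ} (hl : 0 < l) (x : G) (u v : G → ℝ) (hu : ∀ x, |u x| ≤ 1)
    (hv : ∀ x, |v x| ≤ 1) :
    |𝔼 q ∈ B₁, 𝔼 s ∈ B₂, F (x + (s - q)) * u q * v s| ≤ cst B₁ B₂ F l x := by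
  have h := bilinear_pow_four hsym hne₁ hne₂ hcard F u v hF hu hv x
  set I := 𝔼 q ∈ B₁, 𝔼 s ∈ B₂, F (x + (s - q)) * u q * v s
  set Φ := 𝔼 q ∈ B₁, phi B₂ F (x - q) with hΦ
  have hΦ0 : 0 ≤ Φ := avg_nonneg fun _ => phi_nonneg _ _ _
  rw [cst, ← hΦ]
  rcases le_total |I| l with hI | hI
  · exact hI.trans (le_add_of_nonneg_right (by positivity))
  · have h1 : |I| * l ^ 3 ≤ I ^ 4 := by
      calc |I| * l ^ 3 ≤ |I| * |I| ^ 3 :=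
            mul_le_mul_of_nonneg_left (pow_le_pow_left₀ hl.le hI 3) (abs_nonneg _)
        _ = |I| ^ 4 := by ring
        _ = I ^ 4 := Even.pow_abs (by decide) _
    have h2 : |I| ≤ 2 / l ^ 3 * Φ := by
      rw [div_mul_eq_mul_div, le_div_iff₀ (by positivity)]
      exact h1.trans h
    linarith

lemma cst_average {ε : ℝ} (hε : 0 ≤ ε) {B₀ B₁ B₂ : Finset G} (hsym : ∀ b ∈ B₁, -b ∈ B₁)
    (hne : B₀.Nonempty) (h₀ : Small ε B₀ B₁) (F : G → ℝ) (hF : ∀ x, |F x| ≤ 1) {l ρ : ℝ}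
    (hl : 0 < l) (hρ : 𝔼 x ∈ B₀, phi B₂ F x ≤ ρ) :
    𝔼 x ∈ B₀, cst B₁ B₂ F l x ≤ l + 2 / l ^ 3 * (ρ + 2 * ε) := by
  have h1 : |𝔼 x ∈ B₀, 𝔼 q ∈ B₁, phi B₂ F (x - q) - 𝔼 x ∈ B₀, phi B₂ F x| ≤ 2 * ε := by
    rw [expect_comm]
    refine avg_near h₀.ne (by positivity) fun q hq => ?_
    have := h₀.shift (hsym q hq) (phi B₂ F) fun x =>
      abs_le.2 ⟨by linarith [phi_nonneg B₂ F x], phi_le_one B₂ F hF x⟩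
    simpa only [sub_eq_add_neg] using this
  simp only [cst, expect_add_distrib, ← mul_expect, expect_const hne]
  refine add_le_add le_rfl (mul_le_mul_of_nonneg_left ?_ (by positivity))
  linarith [(abs_le.1 h1).2]

/-! ### The main term -/

lemma avg_neg {B : Finset G} (hsym : ∀ b ∈ B, -b ∈ B) (f : G → ℝ) :
    𝔼 q ∈ B, f (-q) = 𝔼 q ∈ B, f q := by
  rw [expect_eq_sum_div_card, expect_eq_sum_div_card]
  congr 1
  exact Finset.sum_nbij' (fun q => -q) (fun q => -q) hsym hsym (by simp) (by simp) (by simp)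

/-- Density of `e` on `x + B₁`, in terms of bilinear uniformity. -/
lemma local_density {ε : ℝ} {B₁ B₂ : Finset G} (hsym : ∀ b ∈ B₁, -b ∈ B₁)
    (hne₁ : B₁.Nonempty) (h₁ : Small ε B₁ B₂) (hε : 0 ≤ ε) (hε1 : ε ≤ 1) (e : G → ℝ)
    (he : ∀ x, 0 ≤ e x ∧ e x ≤ 1) {α : ℝ} (hα : 0 ≤ α ∧ α ≤ 1) {l : ℝ} (hl : 0 < l) (x : G) :
    |𝔼 p ∈ B₁, e (x + p) - α| ≤ cst B₁ B₂ (fun z => e z - α) l x + 2 * ε := by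
  have hcard : ((B₁ + B₂).card : ℝ) ≤ 2 * B₁.card := by
    have := h₁.card
    have := h₁.pos
    nlinarith
  have h2 := bilinear_le_cst hsym hne₁ h₁.ne hcard (fun z => e z - α) (fun z => abs_le.2
    ⟨by linarith [(he z).1], by linarith [(he z).2]⟩) hl x (fun _ => 1) (fun _ => 1)
    (by simp) (by simp)
  simp only [mul_one, expect_sub_distrib, expect_const hne₁, expect_const h₁.ne] at h2
  have h3 : |𝔼 q ∈ B₁, 𝔼 s ∈ B₂, e (x + (s - q)) - 𝔼 p ∈ B₁, e (x + p)| ≤ 2 * ε := by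
    rw [expect_comm]
    refine avg_near h₁.ne (by positivity) fun s hs => ?_
    have h4 := h₁.shift hs (fun z => e (x + z)) fun z => abs_le.2
      ⟨by linarith [(he (x + z)).1], (he (x + z)).2⟩
    rw [← avg_neg hsym] at h4
    refine le_trans (le_of_eq ?_) h4
    congr 2
    exact expect_congr rfl fun q _ => by rw [neg_add_eq_sub]
  rw [abs_le] at *
  constructor <;> linarith

/-- The count of corners in `a` with one of the three copies replaced by the full product
`e₁ ⊗ e₂` is at least the square of the density of `a`. -/
lemma main_term {ε : ℝ} (hε : 0 ≤ ε) {B₀ B₁ B₂ : Finset G} (hsym : ∀ b ∈ B₁, -b ∈ B₁)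
    (h₀ : Small ε B₀ B₁) (h₁ : Small ε B₁ B₂) (e₁ e₂ : G → ℝ)
    (a : G → G → ℝ) (he₁ : IsInd e₁) (he₂ : IsInd e₂) (ha : ∀ x y, a x y = 0 ∨ a x y = 1)
    (hae : ∀ x y, a x y ≤ e₁ x * e₂ y) :
    (𝔼 x ∈ B₀, 𝔼 y ∈ B₀, a x y) ^ 2 - 14 * ε ≤ 𝔼 x ∈ B₀, 𝔼 y ∈ B₀,
      corner B₁ B₂ (fun p q => e₁ (x + p) * e₂ (y + q)) (fun p q => a (x + p) (y + q))
        (fun p q => a (x + p) (y + q)) := by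
  have hne : B₀.Nonempty := ⟨0, h₀.sub h₀.zero⟩
  set α := 𝔼 x ∈ B₀, 𝔼 y ∈ B₀, a x y with hα
  have ha01 : ∀ x y, 0 ≤ a x y ∧ a x y ≤ 1 := fun x y => by
    rcases ha x y with h | h <;> simp [h]
  have haabs : ∀ x y, |a x y| ≤ 1 := fun x y => abs_le.2 ⟨by linarith [(ha01 x y).1], (ha01 x y).2⟩
  have hα0 : 0 ≤ α := avg_nonneg fun x => avg_nonneg fun y => (ha01 x y).1
  have hα1 : α ≤ 1 := avg_le zero_le_one fun x => avg_le zero_le_one fun y => (ha01 x y).2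
  have hm₁ : ∀ x y, e₁ x * a x y = a x y := fun x y => by
    rcases he₁ x with h | h
    · have := hae x y
      rw [h, zero_mul] at this
      rw [le_antisymm this (ha01 x y).1, mul_zero]
    · rw [h, one_mul]
  have hm₂ : ∀ x y, e₂ y * a x y = a x y := fun x y => by
    rcases he₂ y with h | h
    · have := hae x y
      rw [h, mul_zero] at this
      rw [le_antisymm this (ha01 x y).1, mul_zero]
    · rw [h, one_mul]
  set H : G → G → G → ℝ := fun x y s => 𝔼 p ∈ B₁, a (x + p) (y + (s - p)) with hH
  set K : G → G → G → ℝ := fun x y s => 𝔼 q ∈ B₁, a (x + (s - q)) (y + q) with hK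
  have hH01 : ∀ x y s, 0 ≤ H x y s ∧ H x y s ≤ 1 := fun x y s =>
    ⟨avg_nonneg fun _ => (ha01 _ _).1, avg_le zero_le_one fun _ => (ha01 _ _).2⟩
  have hcor : ∀ x y, corner B₁ B₂ (fun p q => e₁ (x + p) * e₂ (y + q))
      (fun p q => a (x + p) (y + q)) (fun p q => a (x + p) (y + q))
      = 𝔼 s ∈ B₂, H x y s * K x y s := fun x y => by
    have e : ∀ p, 𝔼 q ∈ B₁, 𝔼 s ∈ B₂, e₁ (x + p) * e₂ (y + q) * a (x + (s - q)) (y + q)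
        * a (x + p) (y + (s - p)) = 𝔼 s ∈ B₂, 𝔼 q ∈ B₁,
          a (x + p) (y + (s - p)) * a (x + (s - q)) (y + q) := fun p => by
      rw [expect_comm]
      refine expect_congr rfl fun s _ => expect_congr rfl fun q _ => ?_
      rw [← hm₁ (x + p) (y + (s - p)), ← hm₂ (x + (s - q)) (y + q)]
      rcases he₁ (x + p) with h1 | h1 <;> rcases he₂ (y + q) with h2 | h2 <;>
        simp only [h1, h2] <;> ring
    simp only [corner, e]
    rw [expect_comm]
    exact expect_congr rfl fun s _ => (expect_mul_expect _ _ _ _).symm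
  have hKH : ∀ x y, ∀ s ∈ B₂, H x y s - 2 * ε ≤ K x y s := fun x y s hs => by
    have h4 := h₁.shift hs (fun p => a (x + p) (y + (s - p))) fun z => haabs _ _
    rw [← avg_neg hsym] at h4
    have e : K x y s = 𝔼 q ∈ B₁, a (x + (-q + s)) (y + (s - (-q + s))) :=
      expect_congr rfl fun q _ => by
        rw [neg_add_eq_sub, show s - (s - q) = q by abel]
    rw [← e] at h4
    linarith [(abs_le.1 h4).1]
  have hsum : |𝔼 x ∈ B₀, 𝔼 y ∈ B₀, 𝔼 s ∈ B₂, H x y s - α| ≤ 6 * ε := by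
    have e : 𝔼 x ∈ B₀, 𝔼 y ∈ B₀, 𝔼 s ∈ B₂, H x y s
        = 𝔼 s ∈ B₂, 𝔼 p ∈ B₁, 𝔼 x ∈ B₀, 𝔼 y ∈ B₀, a (x + p) (y + (s - p)) := by
      have e1 : ∀ x, 𝔼 y ∈ B₀, 𝔼 s ∈ B₂, H x y s
          = 𝔼 s ∈ B₂, 𝔼 p ∈ B₁, 𝔼 y ∈ B₀, a (x + p) (y + (s - p)) := fun x => by
        rw [expect_comm]
        exact expect_congr rfl fun s _ => expect_comm _ _ _
      simp only [e1]
      rw [expect_comm]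
      exact expect_congr rfl fun s _ => expect_comm _ _ _
    rw [e]
    refine avg_near h₁.ne (by positivity) fun s hs => avg_near h₀.ne (by positivity) fun p hp => ?_
    have k1 := h₀.shift_fst hp (fun x y => a x (y + (s - p))) fun _ _ => haabs _ _
    have k2 := h₀.shift_snd hε (hsym p hp) (fun x y => a x (y + s)) fun _ _ => haabs _ _
    have k3 := h₀.shift_snd hε (h₁.sub hs) a haabs
    have e2 : ∀ y : G, y + (s - p) = y + -p + s := fun y => by abel
    simp only [e2] at k1 ⊢
    rw [abs_le] at *
    constructor <;> linarith
  -- `K` is within `O(ε)` of `H`, and `H ^ 2 ≥ 2 * α * H - α ^ 2`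
  have hpt : ∀ x y, 2 * α * (𝔼 s ∈ B₂, H x y s) - (α ^ 2 + 2 * ε) ≤ 𝔼 s ∈ B₂, H x y s * K x y s := by
    intro x y
    rw [mul_expect, ← expect_const h₁.ne (α ^ 2 + 2 * ε), ← expect_sub_distrib]
    refine expect_le_expect fun s hs => ?_
    have h1 := hKH x y s hs
    have h2 := hH01 x y s
    nlinarith [mul_le_mul_of_nonneg_left h1 h2.1, sq_nonneg (H x y s - α)]
  simp only [hcor]
  have hfin := avg_mono (s := B₀) fun x => avg_mono (s := B₀) fun y => hpt x y
  simp only [expect_sub_distrib, ← mul_expect, expect_const hne] at hfin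
  refine le_trans ?_ hfin
  have := (abs_le.1 hsum).1
  nlinarith

/-! ### Counting corners -/

/-- The number of corners (trivial ones included), weighted by `a`. -/
def cnt (a : G → G → ℝ) : ℝ := ∑ x, ∑ y, ∑ z, a x y * a (x + z) y * a x (y + z)

lemma cnt_mono {a b : G → G → ℝ} (ha : ∀ x y, 0 ≤ a x y) (hab : ∀ x y, a x y ≤ b x y) :
    cnt a ≤ cnt b := by
  refine Finset.sum_le_sum fun x _ => Finset.sum_le_sum fun y _ => Finset.sum_le_sum fun z _ => ?_
  have hb : ∀ x y, 0 ≤ b x y := fun x y => (ha x y).trans (hab x y)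
  exact mul_le_mul (mul_le_mul (hab _ _) (hab _ _) (ha _ _) (hb _ _)) (hab _ _) (ha _ _)
    (mul_nonneg (hb _ _) (hb _ _))

lemma cnt_translate (a : G → G → ℝ) (t u : G) : cnt (fun x y => a (t + x) (u + y)) = cnt a := by
  unfold cnt
  rw [← Equiv.sum_comp (Equiv.addLeft t) fun x => ∑ y, ∑ z, a x y * a (x + z) y * a x (y + z)]
  refine Finset.sum_congr rfl fun x _ => ?_
  rw [← Equiv.sum_comp (Equiv.addLeft u) fun y => ∑ z, a (Equiv.addLeft t x) y *
    a (Equiv.addLeft t x + z) y * a (Equiv.addLeft t x) (y + z)]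
  refine Finset.sum_congr rfl fun y _ => ?_
  simp only [Equiv.coe_addLeft, add_assoc]

/-- Local corners are corners. -/
lemma corner_le_cnt {B₁ B₂ : Finset G} (a : G → G → ℝ) (ha : ∀ x y, 0 ≤ a x y) :
    corner B₁ B₂ a a a * (B₁.card ^ 2 * B₂.card) ≤ cnt a := by
  have h1 : corner B₁ B₂ a a a * (B₁.card ^ 2 * B₂.card)
      = ∑ p ∈ B₁, ∑ q ∈ B₁, ∑ s ∈ B₂, a p q * a (s - q) q * a p (s - p) := by
    unfold corner
    simp only [← card_mul_expect, ← mul_expect]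
    ring
  have h2 : cnt a = ∑ p, ∑ q, ∑ s, a p q * a (s - q) q * a p (s - p) := by
    refine Finset.sum_congr rfl fun p _ => Finset.sum_congr rfl fun q _ => ?_
    rw [← Equiv.sum_comp (Equiv.subRight (p + q))]
    refine Finset.sum_congr rfl fun s _ => ?_
    simp only [Equiv.subRight_apply]
    rw [show p + (s - (p + q)) = s - q by abel, show q + (s - (p + q)) = s - p by abel]
  rw [h1, h2]
  have h0 : ∀ p q s, 0 ≤ a p q * a (s - q) q * a p (s - p) := fun p q s =>
    mul_nonneg (mul_nonneg (ha _ _) (ha _ _)) (ha _ _)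
  have s1 : ∀ p q, ∑ s ∈ B₂, a p q * a (s - q) q * a p (s - p)
      ≤ ∑ s, a p q * a (s - q) q * a p (s - p) := fun p q =>
    Finset.sum_le_univ_sum_of_nonneg fun s => h0 p q s
  have s0 : ∀ p q, 0 ≤ ∑ s, a p q * a (s - q) q * a p (s - p) := fun p q =>
    Finset.sum_nonneg fun s _ => h0 p q s
  calc _ ≤ ∑ p ∈ B₁, ∑ q ∈ B₁, ∑ s, a p q * a (s - q) q * a p (s - p) :=
        Finset.sum_le_sum fun p _ => Finset.sum_le_sum fun q _ => s1 p q
    _ ≤ ∑ p ∈ B₁, ∑ q, ∑ s, a p q * a (s - q) q * a p (s - p) :=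
        Finset.sum_le_sum fun p _ => Finset.sum_le_univ_sum_of_nonneg fun q => s0 p q
    _ ≤ _ := Finset.sum_le_univ_sum_of_nonneg fun p => Finset.sum_nonneg fun q _ => s0 p q

/-! ### The density increment on a stable cell -/

/-- A graded family of symmetric sets such that a set of level `m < M` can be refined to a set of
level `m + 1` which is `ε`-small relative to it and on which a given character is `ε`-trivial. -/
structure BohrSystem (Adm : ℕ → Finset G → Prop) (M : ℕ) (ε : ℝ) : Prop where
  zero : ∀ m B, Adm m B → (0 : G) ∈ B
  symm : ∀ m B, Adm m B → ∀ b ∈ B, -b ∈ B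
  refine : ∀ m B, Adm m B → m < M → ∀ γ : AddChar G ℂ,
    ∃ B', Adm (m + 1) B' ∧ Small ε B B' ∧ ∀ b ∈ B', ‖γ b - 1‖ ≤ ε

/-- Arithmetic of the increment step: a lower bound for the average box norm of the balanced function,
from the two bounds for the mean square of its corner count. -/
lemma box_lower {σ w X Y E : ℝ} (hσ : 0 < σ) (hw : 0 < w) (h1 : (σ ^ 3 * w ^ 2 / 2) ^ 2 ≤ Y)
    (h2 : Y ≤ w ^ 3 * X + E) (hE : E ≤ σ ^ 6 * w ^ 4 / 8) : σ ^ 12 * w ^ 2 / 64 ≤ X ^ 2 := by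
  have h3 : w ^ 3 * (σ ^ 6 * w / 8) ≤ w ^ 3 * X := by nlinarith
  have h4 := le_of_mul_le_mul_left h3 (by positivity)
  calc σ ^ 12 * w ^ 2 / 64 = (σ ^ 6 * w / 8) ^ 2 := by ring
    _ ≤ X ^ 2 := pow_le_pow_left₀ (by positivity) h4 2

set_option maxHeartbeats 1000000 in
/-- On a cell whose energy cannot be increased by more than `ε` three levels down, either there are
many corners or, on a rectangle in some translate of a cell one level down, the density of `a`
relative to `e₁ ⊗ e₂` is at least `σ + δ ^ 12 / 2048`. The hypothesis `hτ` makes all the errors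
caused by the non-uniformity of `e₁` and `e₂` negligible. -/
lemma stable_increment {Adm : ℕ → Finset G → Prop} {M m : ℕ} {ε : ℝ} (hS : BohrSystem Adm M ε)
    (hε : 0 < ε) (e₁ e₂ : G → ℝ) (a : G → G → ℝ) {σ δ ξ l : ℝ}
    (he₁ : IsInd e₁) (he₂ : IsInd e₂) (ha : ∀ x y, a x y = 0 ∨ a x y = 1)
    (hae : ∀ x y, a x y ≤ e₁ x * e₂ y) (hδ : 0 < δ) (hδσ : δ ≤ σ) (hσ1 : σ ≤ 1)
    (hξ : 0 < ξ) (hξ1 : ξ ≤ 1) (hl : 0 < l)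
    (hτ : l + 2 / l ^ 3 * ((3 * ε + l ^ 4 + 41 * ε / (ξ / 4) / l ^ 4) + 2 * ε) + ε
      ≤ δ ^ 12 * ξ ^ 4 / 100000)
    {B₀ : Finset G} (hB₀ : Adm m B₀) (hm : m + 3 ≤ M)
    (hL : ξ ≤ energy (ξ / 4) (fun x y => a x y - σ * (e₁ x * e₂ y)) e₁ e₂ 0 0 B₀)
    (hst : ∀ t u B, Adm (m + 3) B →
      energy (ξ / 4) (fun x y => a x y - σ * (e₁ x * e₂ y)) e₁ e₂ t u B
      ≤ energy (ξ / 4) (fun x y => a x y - σ * (e₁ x * e₂ y)) e₁ e₂ 0 0 B₀ + ε) :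
    (∃ B₁ B₂, Adm (m + 1) B₁ ∧ Adm (m + 2) B₂ ∧
      δ ^ 3 * ξ ^ 2 / 16 * ((B₁.card : ℝ) ^ 2 * B₂.card) ≤ cnt a) ∨
    ∃ B₁, Adm (m + 1) B₁ ∧ ∃ x y, ∃ S₁ S₂ : Finset G, δ ^ 12 / 8192 * ξ ≤ 𝔼 p ∈ B₁, 𝔼 q ∈ B₁,
      (a (x + p) (y + q) * (ind S₁ p * ind S₂ q)
        - (σ + δ ^ 12 / 2048) * ((e₁ (x + p) * ind S₁ p) * (e₂ (y + q) * ind S₂ q))) := by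
  set κ := ξ / 4 with hκ
  have hκ0 : 0 < κ := by positivity
  have hσ0 : 0 < σ := hδ.trans_le hδσ
  set f : G → G → ℝ := fun x y => a x y - σ * (e₁ x * e₂ y) with hf
  obtain ⟨B₁, hB₁, h01, -⟩ := hS.refine m B₀ hB₀ (by omega) 0
  obtain ⟨B₂, hB₂, h12, -⟩ := hS.refine (m + 1) B₁ hB₁ (by omega) 0
  have h02 := h01.trans h12
  have hsym := hS.symm _ _ hB₁
  have hne₀ : B₀.Nonempty := ⟨0, h01.sub h01.zero⟩
  have hne₁ := h01.ne
  have hne₂ := h12.ne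
  have b₁ := he₁.bounds
  have b₂ := he₂.bounds
  have ha01 : ∀ x y, 0 ≤ a x y ∧ a x y ≤ 1 := fun x y => by
    rcases ha x y with h | h <;> simp [h]
  have hee : ∀ x y, 0 ≤ e₁ x * e₂ y ∧ e₁ x * e₂ y ≤ 1 := fun x y =>
    ⟨mul_nonneg (b₁ x).1 (b₂ y).1, mul_le_one₀ (b₁ x).2 (b₂ y).1 (b₂ y).2⟩
  have hf1 : ∀ x y, |f x y| ≤ 1 := fun x y => by
    have h1 := ha01 x y
    have h2 := hee x y
    have h3 : σ * (e₁ x * e₂ y) ≤ 1 := mul_le_one₀ hσ1 h2.1 h2.2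
    have h4 : 0 ≤ σ * (e₁ x * e₂ y) := mul_nonneg hσ0.le h2.1
    simp only [hf]; rw [abs_le]; constructor <;> linarith
  set α₁ := 𝔼 x ∈ B₀, e₁ x with hα₁
  set α₂ := 𝔼 x ∈ B₀, e₂ x with hα₂
  set h := 𝔼 x ∈ B₀, 𝔼 y ∈ B₀, f x y with hh
  set α := 𝔼 x ∈ B₀, 𝔼 y ∈ B₀, a x y with hα
  have bα₁ : 0 ≤ α₁ ∧ α₁ ≤ 1 :=
    ⟨avg_nonneg fun x => (b₁ x).1, avg_le zero_le_one fun x => (b₁ x).2⟩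
  have bα₂ : 0 ≤ α₂ ∧ α₂ ≤ 1 :=
    ⟨avg_nonneg fun x => (b₂ x).1, avg_le zero_le_one fun x => (b₂ x).2⟩
  set w := α₁ * α₂ with hw
  have hwe : w = 𝔼 x ∈ B₀, 𝔼 y ∈ B₀, e₁ x * e₂ y := expect_mul_expect _ _ _ _
  have hw1 : w ≤ 1 := mul_le_one₀ bα₁.2 bα₂.1 bα₂.2
  have hhα : h = α - σ * w := by
    rw [hwe]
    simp only [hh, hf, expect_sub_distrib, ← mul_expect, hα]
  have hαw : α ≤ w := by
    rw [hwe]; exact avg_mono fun x => avg_mono fun y => hae x y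
  have hhξ : ξ / 2 ≤ h := by
    simp only [energy, zero_add] at hL
    have k1 : α₁ ^ 2 ≤ 1 := pow_le_one₀ bα₁.1 bα₁.2
    have k2 : α₂ ^ 2 ≤ 1 := pow_le_one₀ bα₂.1 bα₂.2
    have k3 : κ * (α₁ ^ 2 + α₂ ^ 2) ≤ κ * 2 := mul_le_mul_of_nonneg_left (by linarith) hκ0.le
    have : ξ ≤ h + κ * (α₁ ^ 2 + α₂ ^ 2) := hL
    linarith
  have hσw : 0 ≤ σ * w := mul_nonneg hσ0.le (mul_nonneg bα₁.1 bα₂.1)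
  have hwξ : ξ / 2 ≤ w := by linarith
  have hw0 : 0 < w := by linarith
  have hασ : σ * w ≤ α := by linarith
  obtain ⟨hφ₁, hφ₂⟩ := phi_average hε.le hκ0 (by linarith) hne₀ h02
    (P := Adm (m + 3)) (fun γ => hS.refine (m + 2) B₂ hB₂ (by omega) γ) f hf1 e₁ e₂ b₁ b₂
    hα₁ hα₂ hst (l := l ^ 4) (by positivity)
  set F₁ : G → ℝ := fun z => e₁ z - α₁ with hF₁
  set F₂ : G → ℝ := fun z => e₂ z - α₂ with hF₂
  have bF₁ : ∀ z, |F₁ z| ≤ 1 := fun z =>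
    abs_le.2 ⟨by linarith [(b₁ z).1], by linarith [(b₁ z).2]⟩
  have bF₂ : ∀ z, |F₂ z| ≤ 1 := fun z =>
    abs_le.2 ⟨by linarith [(b₂ z).1], by linarith [(b₂ z).2]⟩
  set C := l + 2 / l ^ 3 * ((3 * ε + l ^ 4 + 41 * ε / κ / l ^ 4) + 2 * ε) with hC
  have hC₁ : 𝔼 x ∈ B₀, cst B₁ B₂ F₁ l x ≤ C := cst_average hε.le hsym hne₀ h01 F₁ bF₁ hl hφ₁
  have hC₂ : 𝔼 x ∈ B₀, cst B₁ B₂ F₂ l x ≤ C := cst_average hε.le hsym hne₀ h01 F₂ bF₂ hl hφ₂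
  have hC0 : 0 < C := by positivity
  have hξ4 : ξ ^ 4 ≤ ξ ^ 2 := pow_le_pow_of_le_one hξ.le hξ1 (by norm_num)
  have hξ41 : ξ ^ 4 ≤ ξ := by
    simpa using pow_le_pow_of_le_one hξ.le hξ1 (show 1 ≤ 4 by norm_num)
  have hδ1 : δ ≤ 1 := hδσ.trans hσ1
  have hδ12 : δ ^ 12 ≤ 1 := pow_le_one₀ hδ.le hδ1
  set τ := δ ^ 12 * ξ ^ 4 / 100000 with hτdef
  have hτξ : τ ≤ ξ / 100000 := by
    rw [hτdef]; have := mul_le_mul hδ12 hξ41 (by positivity) zero_le_one; linarith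
  have hε1 : ε ≤ 1 := by linarith
  have hcard : ((B₁ + B₂).card : ℝ) ≤ 2 * B₁.card := by
    have := h12.card
    have := h12.pos
    nlinarith
  -- the densities `μ₁`, `μ₂` of the translates are close to `α₁`, `α₂`: this is the bilinear bound
  -- with constant test functions
  set c₁ := cst B₁ B₂ F₁ l with hc₁
  set c₂ := cst B₁ B₂ F₂ l with hc₂
  set μ₁ : G → ℝ := fun x => 𝔼 p ∈ B₁, e₁ (x + p) with hμ₁
  set μ₂ : G → ℝ := fun x => 𝔼 p ∈ B₁, e₂ (x + p) with hμ₂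
  have hd₁ : ∀ x, |μ₁ x - α₁| ≤ c₁ x + 2 * ε := fun x =>
    local_density hsym hne₁ h12 hε.le hε1 e₁ b₁ bα₁ hl x
  have hd₂ : ∀ x, |μ₂ x - α₂| ≤ c₂ x + 2 * ε := fun x =>
    local_density hsym hne₁ h12 hε.le hε1 e₂ b₂ bα₂ hl x
  set Ta : G → G → ℝ := fun x y => corner B₁ B₂ (fun p q => a (x + p) (y + q))
    (fun p q => a (x + p) (y + q)) (fun p q => a (x + p) (y + q)) with hTa
  set Te : G → G → ℝ := fun x y => corner B₁ B₂ (fun p q => e₁ (x + p) * e₂ (y + q))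
    (fun p q => a (x + p) (y + q)) (fun p q => a (x + p) (y + q)) with hTe
  set Tf : G → G → ℝ := fun x y => corner B₁ B₂ (fun p q => f (x + p) (y + q))
    (fun p q => a (x + p) (y + q)) (fun p q => a (x + p) (y + q)) with hTf
  set bx : G → G → ℝ := fun x y => box B₁ fun p q => f (x + p) (y + q) with hbx
  have hsplit : ∀ x y, Tf x y = Ta x y - σ * Te x y := fun x y => by
    simp only [hTa, hTe, hTf, corner, mul_expect, ← expect_sub_distrib]
    refine expect_congr rfl fun p _ => expect_congr rfl fun q _ => expect_congr rfl fun s _ => ?_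
    simp only [hf]; ring
  have hvN : ∀ x y, Tf x y ^ 2 ≤ w ^ 3 * √(bx x y) + (3 * c₁ x + 3 * c₂ y + 4 * ε) := by
    intro x y
    have k := vonNeumann hne₂ (fun p => e₁ (x + p)) (fun q => e₂ (y + q))
      (fun p q => a (x + p) (y + q)) (fun p q => f (x + p) (y + q)) (fun _ => b₁ _) (fun _ => b₂ _)
      (fun p q => ⟨(ha01 _ _).1, hae _ _⟩) (fun p q => hf1 _ _) bα₁.1 bα₁.2 bα₂.1 bα₂.2
      ((abs_nonneg _).trans (hd₁ x)) ((abs_nonneg _).trans (hd₂ y))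
      (fun u v hu hv => bilinear_le_cst hsym hne₁ hne₂ hcard F₁ bF₁ hl x u v hu hv)
      (fun u v hu hv => bilinear_le_cst hsym hne₁ hne₂ hcard F₂ bF₂ hl y u v hu hv)
      (by linarith [(abs_le.1 (hd₁ x)).2]) (by linarith [(abs_le.1 (hd₂ y)).2])
    refine k.trans (le_of_eq ?_)
    simp only [hbx, hw]; ring
  by_cases hT : δ ^ 3 * ξ ^ 2 / 16 ≤ 𝔼 x ∈ B₀, 𝔼 y ∈ B₀, Ta x y
  · left
    obtain ⟨x, -, hx⟩ := exists_le_of_le_expect hne₀ hT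
    obtain ⟨y, -, hy⟩ := exists_le_of_le_expect hne₀ hx
    refine ⟨B₁, B₂, hB₁, hB₂, ?_⟩
    have k := corner_le_cnt (B₁ := B₁) (B₂ := B₂) (fun p q => a (x + p) (y + q))
      fun _ _ => (ha01 _ _).1
    rw [cnt_translate] at k
    exact (mul_le_mul_of_nonneg_right hy (by positivity)).trans k
  right
  refine ⟨B₁, hB₁, ?_⟩
  rw [not_le] at hT
  have hc0 : δ ^ 3 * ξ ^ 2 / 16 ≤ σ ^ 3 * w ^ 2 / 4 := by
    have k1 : δ ^ 3 ≤ σ ^ 3 := pow_le_pow_left₀ hδ.le hδσ 3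
    have k2 : (ξ / 2) ^ 2 ≤ w ^ 2 := pow_le_pow_left₀ (by positivity) hwξ 2
    have := mul_le_mul k1 k2 (by positivity) (by positivity)
    linarith
  have hδ3 : δ ^ 12 ≤ δ ^ 3 := pow_le_pow_of_le_one hδ.le hδ1 (by norm_num)
  have hδ6 : δ ^ 12 ≤ δ ^ 6 := pow_le_pow_of_le_one hδ.le hδ1 (by norm_num)
  have hσ12 : δ ^ 12 ≤ σ ^ 12 := pow_le_pow_left₀ hδ.le hδσ 12
  have hε14 : 14 * ε ≤ σ ^ 3 * w ^ 2 / 4 := by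
    have := mul_le_mul hδ3 hξ4 (by positivity) (by positivity)
    linarith
  have hE6 : 6 * C + 4 * ε ≤ σ ^ 6 * w ^ 4 / 8 := by
    have k1 : δ ^ 12 ≤ σ ^ 6 := hδ6.trans (pow_le_pow_left₀ hδ.le hδσ 6)
    have k2 : (ξ / 2) ^ 4 ≤ w ^ 4 := pow_le_pow_left₀ (by positivity) hwξ 4
    have := mul_le_mul k1 k2 (by positivity) (by positivity)
    have : (0:ℝ) ≤ δ ^ 12 * ξ ^ 4 := by positivity
    linarith
  have hθ : 80 * τ ≤ δ ^ 12 * w ^ 2 / 256 := by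
    have k2 : (ξ / 2) ^ 2 ≤ w ^ 2 := pow_le_pow_left₀ (by positivity) hwξ 2
    have k3 := mul_le_mul_of_nonneg_left k2 (show 0 ≤ δ ^ 12 by positivity)
    have k4 := mul_le_mul_of_nonneg_left hξ4 (show 0 ≤ δ ^ 12 by positivity)
    have : (0:ℝ) ≤ δ ^ 12 * ξ ^ 2 := by positivity
    linarith
  have hmain := main_term hε.le hsym h01 h12 e₁ e₂ a he₁ he₂ ha hae
  -- few corners means that `Ta` is small, so `Tf = Ta - σ * Te` is about minus its main term
  have hTf_low : σ ^ 3 * w ^ 2 / 2 ≤ - 𝔼 x ∈ B₀, 𝔼 y ∈ B₀, Tf x y := by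
    have k1 : 𝔼 x ∈ B₀, 𝔼 y ∈ B₀, Tf x y
        = 𝔼 x ∈ B₀, 𝔼 y ∈ B₀, Ta x y - σ * 𝔼 x ∈ B₀, 𝔼 y ∈ B₀, Te x y := by
      simp only [hsplit, expect_sub_distrib, ← mul_expect]
    have k2 : (σ * w) ^ 2 ≤ α ^ 2 := pow_le_pow_left₀ hσw hασ 2
    have k3 : α ^ 2 - 14 * ε ≤ 𝔼 x ∈ B₀, 𝔼 y ∈ B₀, Te x y := hmain
    have k4 : σ * ((σ * w) ^ 2 - 14 * ε) ≤ σ * 𝔼 x ∈ B₀, 𝔼 y ∈ B₀, Te x y :=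
      mul_le_mul_of_nonneg_left (by linarith) hσ0.le
    have k5 : σ * (14 * ε) ≤ 14 * ε := by nlinarith
    rw [k1]
    nlinarith
  have hTf_sq : (σ ^ 3 * w ^ 2 / 2) ^ 2 ≤ 𝔼 x ∈ B₀, 𝔼 y ∈ B₀, Tf x y ^ 2 := by
    have k := cs_two_one B₀ B₀ (fun _ _ => 1) Tf (by simp)
    simp only [one_mul] at k
    refine le_trans ?_ k
    rw [← neg_sq (𝔼 x ∈ B₀, 𝔼 y ∈ B₀, Tf x y)]
    exact pow_le_pow_left₀ (by positivity) hTf_low 2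
  -- the generalised von Neumann inequality, averaged over the translates
  have hTf_up : 𝔼 x ∈ B₀, 𝔼 y ∈ B₀, Tf x y ^ 2
      ≤ w ^ 3 * (𝔼 x ∈ B₀, 𝔼 y ∈ B₀, √(bx x y)) + (6 * C + 4 * ε) := by
    have k := avg_mono (s := B₀) fun x => avg_mono (s := B₀) fun y => hvN x y
    simp only [expect_add_distrib, ← mul_expect, expect_const hne₀] at k
    linarith
  have hbox := box_lower hσ0 hw0 hTf_sq hTf_up hE6
  have hboxav : δ ^ 12 * w ^ 2 / 64 ≤ 𝔼 x ∈ B₀, 𝔼 y ∈ B₀, bx x y := by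
    have k := cs_two_one B₀ B₀ (fun _ _ => 1) (fun x y => √(bx x y)) (by simp)
    simp only [one_mul, hbx, Real.sq_sqrt (box_nonneg _ _)] at k
    refine le_trans ?_ (hbox.trans k)
    have := mul_le_mul_of_nonneg_right hσ12 (sq_nonneg w)
    linarith
  -- for every translate, the rectangle where `f` has the largest bias `J`
  have hinc := fun x y => box_increment (B := B₁) (fun p => e₁ (x + p)) (fun q => e₂ (y + q))
    (fun p q => a (x + p) (y + q)) (fun _ => he₁ _) (fun _ => he₂ _) (fun _ _ => ha _ _)
    (fun _ _ => hae _ _) hσ0.le hσ1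
  choose S₁ S₂ hD hbD using hinc
  set J : G → G → ℝ := fun x y =>
    𝔼 p ∈ B₁, 𝔼 q ∈ B₁, f (x + p) (y + q) * (ind (S₁ x y) p * ind (S₂ x y) q) with hJ
  set μ : G → G → ℝ := fun x y => 𝔼 p ∈ B₁, 𝔼 q ∈ B₁, f (x + p) (y + q) with hμ
  have hD' : ∀ x y, 0 ≤ 3 * J x y - μ x y := hD
  have hbD' : ∀ x y, bx x y ≤ 4 * (μ₁ x * μ₂ y) * (3 * J x y - μ x y) := hbD
  have hJ1 : ∀ x y, J x y ≤ 1 := fun x y => (abs_le.1 (avg_abs_le zero_le_one fun p =>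
    avg_abs_le zero_le_one fun q => abs_mul_le_one (hf1 _ _) (abs_le.2 ⟨by
      linarith [mul_nonneg ((ind_isInd (S₁ x y)).bounds p).1 ((ind_isInd (S₂ x y)).bounds q).1],
      mul_le_one₀ ((ind_isInd (S₁ x y)).bounds p).2 ((ind_isInd (S₂ x y)).bounds q).1
        ((ind_isInd (S₂ x y)).bounds q).2⟩))).2
  have hμ1 : ∀ x y, -1 ≤ μ x y := fun x y => (abs_le.1 (avg_abs_le zero_le_one fun p =>
    avg_abs_le zero_le_one fun q => hf1 _ _)).1
  have bμ₁ : ∀ x, 0 ≤ μ₁ x ∧ μ₁ x ≤ 1 := fun x =>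
    ⟨avg_nonneg fun _ => (b₁ _).1, avg_le zero_le_one fun _ => (b₁ _).2⟩
  have bμ₂ : ∀ x, 0 ≤ μ₂ x ∧ μ₂ x ≤ 1 := fun x =>
    ⟨avg_nonneg fun _ => (b₂ _).1, avg_le zero_le_one fun _ => (b₂ _).2⟩
  have hww : ∀ x y, μ₁ x * μ₂ y ≤ w + (c₁ x + c₂ y + 4 * ε) := fun x y => by
    have k1 := (abs_le.1 (hd₁ x)).2
    have k2 := (abs_le.1 (hd₂ y)).2
    have k3 := (abs_nonneg _).trans (hd₁ x)
    have k4 := (abs_nonneg _).trans (hd₂ y)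
    have k5 : (μ₁ x - α₁) * μ₂ y ≤ c₁ x + 2 * ε := by
      have := mul_le_mul_of_nonneg_right k1 (bμ₂ y).1
      have := mul_le_mul_of_nonneg_left (bμ₂ y).2 k3
      linarith
    have k6 : α₁ * (μ₂ y - α₂) ≤ c₂ y + 2 * ε := by
      have := mul_le_mul_of_nonneg_left k2 bα₁.1
      have := mul_le_mul_of_nonneg_right bα₁.2 k4
      linarith
    have : μ₁ x * μ₂ y = (μ₁ x - α₁) * μ₂ y + α₁ * (μ₂ y - α₂) + α₁ * α₂ := by ring
    rw [this, hw]
    linarith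
  have hbxJ : ∀ x y, bx x y ≤ 12 * w * J x y - 4 * w * μ x y
      + (16 * c₁ x + 16 * c₂ y + 64 * ε) := fun x y => by
    have k1 := mul_le_mul_of_nonneg_right (hww x y) (hD' x y)
    have k2 : (c₁ x + c₂ y + 4 * ε) * (3 * J x y - μ x y) ≤ (c₁ x + c₂ y + 4 * ε) * 4 := by
      refine mul_le_mul_of_nonneg_left (by linarith [hJ1 x y, hμ1 x y]) ?_
      have k3 := (abs_nonneg _).trans (hd₁ x)
      have k4 := (abs_nonneg _).trans (hd₂ y)
      linarith
    have := hbD' x y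
    linarith
  have hμav : |𝔼 x ∈ B₀, 𝔼 y ∈ B₀, μ x y - h| ≤ 4 * ε := h01.shift_both_avg hε.le f hf1
  have hJav : δ ^ 12 * w / 1024 ≤ 𝔼 x ∈ B₀, 𝔼 y ∈ B₀, J x y := by
    have k := avg_mono (s := B₀) fun x => avg_mono (s := B₀) fun y => hbxJ x y
    simp only [expect_add_distrib, expect_sub_distrib, ← mul_expect, expect_const hne₀] at k
    have k1 : -(4 * ε) ≤ 𝔼 x ∈ B₀, 𝔼 y ∈ B₀, μ x y := by
      have := (abs_le.1 hμav).1
      linarith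
    have k2 : w * (-(4 * ε)) ≤ w * 𝔼 x ∈ B₀, 𝔼 y ∈ B₀, μ x y :=
      mul_le_mul_of_nonneg_left k1 hw0.le
    have k3 : w * ε ≤ ε := by nlinarith
    have k4 : w * (δ ^ 12 * w / 1024) ≤ w * 𝔼 x ∈ B₀, 𝔼 y ∈ B₀, J x y := by linarith
    exact le_of_mul_le_mul_left k4 hw0
  have hwav : 𝔼 x ∈ B₀, 𝔼 y ∈ B₀, μ₁ x * μ₂ y ≤ 3 / 2 * w := by
    have k := avg_mono (s := B₀) fun x => avg_mono (s := B₀) fun y => hww x y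
    simp only [expect_add_distrib, expect_const hne₀] at k
    linarith
  -- a translate is chosen by averaging `J` against the product of the local densities, which makes
  -- the gain in density relative to `μ₁ x * μ₂ y`
  have hfin : δ ^ 12 / 8192 * ξ ≤ 𝔼 x ∈ B₀, 𝔼 y ∈ B₀, (J x y - δ ^ 12 / 2048 * (μ₁ x * μ₂ y)) := by
    simp only [expect_sub_distrib, ← mul_expect (a := δ ^ 12 / 2048)]
    have k1 := mul_le_mul_of_nonneg_left hwav (show 0 ≤ δ ^ 12 / 2048 by positivity)
    have k2 := mul_le_mul_of_nonneg_left hwξ (show 0 ≤ δ ^ 12 by positivity)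
    linarith
  obtain ⟨x, -, hx⟩ := exists_le_of_le_expect hne₀ hfin
  obtain ⟨y, -, hy⟩ := exists_le_of_le_expect hne₀ hx
  refine ⟨x, y, S₁ x y, S₂ x y, hy.trans ?_⟩
  have hprod : μ₁ x * μ₂ y = 𝔼 p ∈ B₁, 𝔼 q ∈ B₁, e₁ (x + p) * e₂ (y + q) :=
    expect_mul_expect _ _ _ _
  rw [hprod]
  simp only [hJ, mul_expect, ← expect_sub_distrib]
  refine avg_mono fun p => avg_mono fun q => ?_
  have i1 := (ind_isInd (S₁ x y)).bounds p
  have i2 := (ind_isInd (S₂ x y)).bounds q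
  have k1 : (e₁ (x + p) * e₂ (y + q)) * (ind (S₁ x y) p * ind (S₂ x y) q)
      ≤ e₁ (x + p) * e₂ (y + q) :=
    mul_le_of_le_one_right (hee _ _).1 (mul_le_one₀ i1.2 i2.1 i2.2)
  have k2 := mul_le_mul_of_nonneg_left k1 (show 0 ≤ δ ^ 12 / 2048 by positivity)
  simp only [hf]
  linarith

/-! ### Iterating the density increment -/

/-- A bounded quantity can only be increased by `ε` boundedly often when passing to cells three
levels deeper, so that some cell is stable. -/
lemma exists_stable {Adm : ℕ → Finset G → Prop} (L : G → G → Finset G → ℝ) {ε : ℝ}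
    (hL : ∀ t u B, L t u B ≤ 2) {n m : ℕ} (hn : 2 ≤ n * ε) {t u : G} {B : Finset G}
    (hB : Adm m B) (hpos : 0 < L t u B) :
    ∃ m' ≤ m + 3 * n, ∃ t' u' B', Adm m' B' ∧ L t u B ≤ L t' u' B' ∧
      ∀ t₂ u₂ B₂, Adm (m' + 3) B₂ → L t₂ u₂ B₂ ≤ L t' u' B' + ε := by
  by_contra! hcon
  rcases lt_or_ge ε 0 with hε | hε
  · nlinarith [(Nat.cast_nonneg n : (0 : ℝ) ≤ n)]
  have key : ∀ k ≤ n, ∃ t' u' B', Adm (m + 3 * k) B' ∧ L t u B + k * ε ≤ L t' u' B' := by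
    intro k
    induction k with
    | zero => exact fun _ => ⟨t, u, B, hB, by simp⟩
    | succ k ih =>
      intro hk
      obtain ⟨t', u', B', hA, hl⟩ := ih (by omega)
      have hkε : 0 ≤ (k : ℝ) * ε := by positivity
      obtain ⟨t₂, u₂, B₂, hA₂, hl₂⟩ := hcon (m + 3 * k) (by omega) t' u' B' hA (by linarith)
      refine ⟨t₂, u₂, B₂, by simpa [mul_add, add_assoc] using hA₂, ?_⟩
      push_cast
      linarith
  obtain ⟨t', u', B', -, h⟩ := key n le_rfl
  linarith [hL t' u' B']

/-- On some cell of level `m`, a set of indicator `a` contained in a product set, of indicator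
`e₁ ⊗ e₂`, exceeds the density `σ` relative to this product set by `ξ` (in absolute terms), while
`a` has at most `K` corners. -/
def Excess (Adm : ℕ → Finset G → Prop) (K σ ξ : ℝ) (m : ℕ) : Prop :=
  ∃ (a : G → G → ℝ) (e₁ e₂ : G → ℝ) (B : Finset G), IsInd e₁ ∧ IsInd e₂ ∧
    (∀ x y, a x y = 0 ∨ a x y = 1) ∧ (∀ x y, a x y ≤ e₁ x * e₂ y) ∧ cnt a ≤ K ∧ Adm m B ∧
    ξ ≤ 𝔼 p ∈ B, 𝔼 q ∈ B, (a p q - σ * (e₁ p * e₂ q))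

lemma Excess.lt_one {Adm : ℕ → Finset G → Prop} {K σ ξ : ℝ} {m : ℕ} (h : Excess Adm K σ ξ m)
    (hξ : 0 < ξ) : σ < 1 := by
  obtain ⟨a, e₁, e₂, B, he₁, he₂, -, hae, -, -, hx⟩ := h
  by_contra! hσ
  have : 𝔼 p ∈ B, 𝔼 q ∈ B, (a p q - σ * (e₁ p * e₂ q)) ≤ 0 :=
    avg_le le_rfl fun p => avg_le le_rfl fun q => by
      have h1 := mul_nonneg (he₁.bounds p).1 (he₂.bounds q).1
      nlinarith [hae p q]
  linarith

lemma energy_le_two {κ σ : ℝ} (hκ1 : κ ≤ 1 / 2) (hσ : 0 ≤ σ) {a : G → G → ℝ}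
    {e₁ e₂ : G → ℝ} (he₁ : IsInd e₁) (he₂ : IsInd e₂) (hae : ∀ x y, a x y ≤ e₁ x * e₂ y)
    (t u : G) (B : Finset G) :
    energy κ (fun x y => a x y - σ * (e₁ x * e₂ y)) e₁ e₂ t u B ≤ 2 := by
  unfold energy
  have h1 : 𝔼 p ∈ B, 𝔼 q ∈ B, (a (t + p) (u + q) - σ * (e₁ (t + p) * e₂ (u + q))) ≤ 1 :=
    avg_le zero_le_one fun p => avg_le zero_le_one fun q => by
      have h1 := he₁.bounds (t + p)
      have h2 := he₂.bounds (u + q)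
      have := mul_le_one₀ h1.2 h2.1 h2.2
      nlinarith [hae (t + p) (u + q), mul_nonneg h1.1 h2.1,
        mul_nonneg hσ (mul_nonneg h1.1 h2.1)]
  have h2 : ∀ e : G → ℝ, IsInd e → ∀ t, (𝔼 p ∈ B, e (t + p)) ^ 2 ≤ 1 := fun e he t =>
    pow_le_one₀ (avg_nonneg fun p => (he.bounds _).1) (avg_le zero_le_one fun p => (he.bounds _).2)
  nlinarith [h2 e₁ he₁ t, h2 e₂ he₂ u, sq_nonneg (𝔼 p ∈ B, e₁ (t + p)),
    sq_nonneg (𝔼 p ∈ B, e₂ (u + p))]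

/-- One density increment: either there are many corners or the relative density increases. -/
lemma Excess.increment {Adm : ℕ → Finset G → Prop} {M n m : ℕ} {ε δ K σ ξ l β : ℝ}
    (hS : BohrSystem Adm M ε) (hε : 0 < ε) (hδ : 0 < δ) (hδσ : δ ≤ σ) (hξ : 0 < ξ) (hl : 0 < l)
    (hτ : l + 2 / l ^ 3 * ((3 * ε + l ^ 4 + 41 * ε / (ξ / 4) / l ^ 4) + 2 * ε) + ε
      ≤ δ ^ 12 * ξ ^ 4 / 100000)
    (hβ0 : 0 ≤ β) (hβ : ∀ m B, m ≤ M → Adm m B → β ≤ B.card) (hn : 2 ≤ n * ε)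
    (hm : m + 3 * n + 3 ≤ M) (hE : Excess Adm K σ ξ m) :
    δ ^ 3 * ξ ^ 2 / 16 * β ^ 3 ≤ K ∨
      ∃ m' ≤ m + 3 * n + 1, Excess Adm K (σ + δ ^ 12 / 2048) (δ ^ 12 / 8192 * ξ) m' := by
  have hσ1 := (hE.lt_one hξ).le
  have hσ0 : 0 ≤ σ := hδ.le.trans hδσ
  obtain ⟨a, e₁, e₂, B, he₁, he₂, ha, hae, hK, hB, hx⟩ := hE
  have hξ1 : ξ ≤ 1 := by
    refine hx.trans (avg_le zero_le_one fun p => avg_le zero_le_one fun q => ?_)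
    have h1 := mul_nonneg (he₁.bounds p).1 (he₂.bounds q).1
    have h2 := mul_nonneg hσ0 h1
    rcases ha p q with h | h <;> rw [h] <;> linarith
  set F : G → G → ℝ := fun x y => a x y - σ * (e₁ x * e₂ y) with hF
  set L : G → G → Finset G → ℝ := fun t u B => energy (ξ / 4) F e₁ e₂ t u B with hLdef
  have hL0 : ξ ≤ L 0 0 B := by
    simp only [hLdef, energy, zero_add]
    have : 0 ≤ ξ / 4 * ((𝔼 p ∈ B, e₁ p) ^ 2 + (𝔼 q ∈ B, e₂ q) ^ 2) := by positivity
    exact hx.trans (le_add_of_nonneg_right this)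
  obtain ⟨m', hm', t, u, B', hB', hL', hst⟩ := exists_stable (Adm := Adm) L
    (fun t u B => energy_le_two (by linarith) hσ0 he₁ he₂ hae t u B) hn hB
    (hξ.trans_le hL0)
  -- the stable cell is moved to the origin, where `stable_increment` applies
  have htr : ∀ s v B, energy (ξ / 4) (fun x y => a (t + x) (u + y) -
      σ * (e₁ (t + x) * e₂ (u + y))) (fun x => e₁ (t + x)) (fun y => e₂ (u + y)) s v B
      = L (t + s) (u + v) B := fun s v B => by
    simp only [hLdef, energy, hF, add_assoc]
  rcases stable_increment hS hε (fun x => e₁ (t + x)) (fun y => e₂ (u + y))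
    (fun x y => a (t + x) (u + y)) (fun x => he₁ _) (fun x => he₂ _) (fun x y => ha _ _)
    (fun x y => hae _ _) hδ hδσ hσ1 hξ hξ1 hl hτ hB' (by omega)
    (by rw [htr, add_zero, add_zero]; exact hL0.trans hL')
    (fun s v B₂ hB₂ => by
      rw [htr, htr, add_zero, add_zero]
      exact hst _ _ _ hB₂) with ⟨B₁, B₂, hB₁, hB₂, hc⟩ | ⟨B₁, hB₁, x, y, S₁, S₂, hc⟩
  · left
    rw [cnt_translate] at hc
    refine le_trans ?_ (hc.trans hK)
    have h1 := hβ _ _ (by omega) hB₁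
    have h2 := hβ _ _ (by omega) hB₂
    have h3 : β ^ 3 ≤ (B₁.card : ℝ) ^ 2 * B₂.card := by
      rw [pow_succ β 2]
      exact mul_le_mul (pow_le_pow_left₀ hβ0 h1 2) h2 hβ0 (by positivity)
    exact mul_le_mul_of_nonneg_left h3 (by positivity)
  · right
    have hp : ∀ S : Finset G, ∀ p, ind S p = 0 ∨ ind S p = 1 := fun S => ind_isInd S
    have hmul : ∀ {r s : ℝ}, (r = 0 ∨ r = 1) → (s = 0 ∨ s = 1) → (r * s = 0 ∨ r * s = 1) := by
      rintro r s (rfl | rfl) (rfl | rfl) <;> simp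
    have hnn : ∀ {r : ℝ}, (r = 0 ∨ r = 1) → 0 ≤ r ∧ r ≤ 1 := by
      rintro r (rfl | rfl) <;> norm_num
    refine ⟨m' + 1, by omega,
      fun p q => a (t + (x + p)) (u + (y + q)) * (ind S₁ p * ind S₂ q),
      fun p => e₁ (t + (x + p)) * ind S₁ p, fun q => e₂ (u + (y + q)) * ind S₂ q, B₁,
      fun p => hmul (he₁ _) (hp _ _), fun p => hmul (he₂ _) (hp _ _),
      fun p q => hmul (ha _ _) (hmul (hp _ _) (hp _ _)), fun p q => ?_, ?_, hB₁, hc⟩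
    · have h0 := (hnn (hmul (hp S₁ p) (hp S₂ q))).1
      nlinarith [mul_le_mul_of_nonneg_right (hae (t + (x + p)) (u + (y + q))) h0]
    · refine le_trans ?_ hK
      rw [← cnt_translate a (t + x) (u + y)]
      refine cnt_mono (fun p q => (hnn (hmul (ha _ _) (hmul (hp _ _) (hp _ _)))).1) fun p q => ?_
      rw [add_assoc, add_assoc]
      exact mul_le_of_le_one_right (hnn (ha _ _)).1 (hnn (hmul (hp S₁ p) (hp S₂ q))).2

/-- The increment can be repeated at most `ν` times when `ν` increments exceed density one. -/
lemma Excess.many {Adm : ℕ → Finset G → Prop} {M n ν : ℕ} {ε δ K l β ξ' : ℝ}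
    (hS : BohrSystem Adm M ε) (hε : 0 < ε) (hδ : 0 < δ) (hδ1 : δ ≤ 1) (hl : 0 < l)
    (hξ' : 0 < ξ') (hξν : ξ' ≤ (δ ^ 12 / 8192) ^ ν * δ)
    (hτ : l + 2 / l ^ 3 * ((3 * ε + l ^ 4 + 41 * ε / (ξ' / 4) / l ^ 4) + 2 * ε) + ε
      ≤ δ ^ 12 * ξ' ^ 4 / 100000)
    (hβ0 : 0 ≤ β) (hβ : ∀ m B, m ≤ M → Adm m B → β ≤ B.card) (hn : 2 ≤ n * ε)
    (hν : 1 ≤ ν * (δ ^ 12 / 2048)) (hM : ν * (3 * n + 1) + 3 * n + 3 ≤ M)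
    (hE : Excess Adm K δ δ 0) :
    δ ^ 3 * ξ' ^ 2 / 16 * β ^ 3 ≤ K := by
  by_contra! hK
  have hr : 0 < δ ^ 12 / 8192 := by positivity
  have hr1 : δ ^ 12 / 8192 ≤ 1 := by
    have := pow_le_one₀ (n := 12) hδ.le hδ1
    linarith
  have key : ∀ k ≤ ν, ∃ m ≤ k * (3 * n + 1),
      Excess Adm K (δ + k * (δ ^ 12 / 2048)) ((δ ^ 12 / 8192) ^ k * δ) m := by
    intro k
    induction k with
    | zero => exact fun _ => ⟨0, by simp, by simpa using hE⟩
    | succ k ih =>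
      intro hk
      obtain ⟨m, hm, hex⟩ := ih (by omega)
      have hξk : ξ' ≤ (δ ^ 12 / 8192) ^ k * δ := hξν.trans
        (mul_le_mul_of_nonneg_right (pow_le_pow_of_le_one hr.le hr1 (by omega)) hδ.le)
      have hk0 : 0 ≤ (k : ℝ) * (δ ^ 12 / 2048) := by positivity
      have hmul : k * (3 * n + 1) ≤ ν * (3 * n + 1) := Nat.mul_le_mul_right _ (by omega)
      have hτ' : l + 2 / l ^ 3 * ((3 * ε + l ^ 4 + 41 * ε / ((δ ^ 12 / 8192) ^ k * δ / 4) / l ^ 4)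
          + 2 * ε) + ε ≤ δ ^ 12 * ((δ ^ 12 / 8192) ^ k * δ) ^ 4 / 100000 := by
        refine le_trans ?_ (hτ.trans ?_)
        · gcongr
        · gcongr
      rcases hex.increment hS hε hδ (by linarith) (hξ'.trans_le hξk) hl hτ' hβ0 hβ hn (by omega)
        with h | ⟨m', hm', h⟩
      · refine absurd (le_trans ?_ h) (not_le.2 hK)
        gcongr
      · refine ⟨m', by rw [Nat.succ_mul]; omega, ?_⟩
        convert h using 1
        · push_cast; ring
        · rw [pow_succ]; ring
  obtain ⟨m, -, hm⟩ := key ν le_rfl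
  have := hm.lt_one (by positivity)
  linarith

/-! ### Bohr sets -/

/-- The Bohr set of width `ρ` of a finite set `Γ` of characters. -/
def bohr (Γ : Finset (AddChar G ℂ)) (ρ : ℝ) : Finset G := {x | ∀ γ ∈ Γ, ‖γ x - 1‖ ≤ ρ}

lemma mem_bohr {Γ : Finset (AddChar G ℂ)} {ρ : ℝ} {x : G} :
    x ∈ bohr Γ ρ ↔ ∀ γ ∈ Γ, ‖γ x - 1‖ ≤ ρ := by simp [bohr]

lemma zero_mem_bohr (Γ : Finset (AddChar G ℂ)) {ρ : ℝ} (hρ : 0 ≤ ρ) : (0 : G) ∈ bohr Γ ρ :=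
  mem_bohr.2 fun γ _ => by simpa using hρ

lemma norm_sub_char (γ : AddChar G ℂ) (x y : G) : ‖γ (x - y) - 1‖ = ‖γ x - γ y‖ := by
  have h1 : γ x = γ (x - y) * γ y := by rw [← AddChar.map_add_eq_mul, sub_add_cancel]
  rw [h1, ← sub_one_mul, norm_mul, AddChar.norm_apply, mul_one]

lemma neg_mem_bohr {Γ : Finset (AddChar G ℂ)} {ρ : ℝ} {x : G} (hx : x ∈ bohr Γ ρ) :
    -x ∈ bohr Γ ρ := mem_bohr.2 fun γ hγ => by
  have := norm_sub_char γ 0 x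
  rw [zero_sub, AddChar.map_zero_eq_one, norm_sub_rev 1] at this
  exact this.trans_le (mem_bohr.1 hx γ hγ)

lemma add_mem_bohr {Γ : Finset (AddChar G ℂ)} {ρ ρ' : ℝ} {x y : G} (hx : x ∈ bohr Γ ρ)
    (hy : y ∈ bohr Γ ρ') : x + y ∈ bohr Γ (ρ + ρ') := mem_bohr.2 fun γ hγ => by
  have h1 : γ (x + y) - 1 = γ y * (γ x - 1) + (γ y - 1) := by
    rw [AddChar.map_add_eq_mul]; ring
  rw [h1]
  refine (norm_add_le _ _).trans (add_le_add ?_ (mem_bohr.1 hy γ hγ))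
  rw [norm_mul, AddChar.norm_apply, one_mul]
  exact mem_bohr.1 hx γ hγ

lemma bohr_mono {Γ Γ' : Finset (AddChar G ℂ)} (hΓ : Γ ⊆ Γ') {ρ ρ' : ℝ} (hρ : ρ' ≤ ρ) :
    bohr Γ' ρ' ⊆ (bohr Γ ρ : Finset G) := fun _ hx =>
  mem_bohr.2 fun γ hγ => (mem_bohr.1 hx γ (hΓ hγ)).trans hρ

/-- Bohr sets are large: by the pigeonhole principle on a grid of mesh `1 / c`. -/
lemma card_le_bohr (Γ : Finset (AddChar G ℂ)) {ρ : ℝ} {c : ℕ} (hc : 0 < c) (hρ : 2 / c ≤ ρ) :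
    Fintype.card G ≤ (bohr Γ ρ : Finset G).card * ((2 * c + 1) ^ 2) ^ Γ.card := by
  classical
  have hc' : (0 : ℝ) < c := by exact_mod_cast hc
  let f : G → (Γ → ℤ × ℤ) := fun x γ => (⌊((γ : AddChar G ℂ) x).re * c⌋, ⌊((γ : AddChar G ℂ) x).im * c⌋)
  have hfl : ∀ r : ℝ, |r| ≤ 1 → ⌊r * c⌋ ∈ Finset.Icc (-(c : ℤ)) c := fun r hr => by
    have := abs_le.1 hr
    rw [Finset.mem_Icc]
    constructor
    · refine Int.le_floor.2 ?_
      push_cast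
      nlinarith
    · have : ⌊r * c⌋ ≤ ⌊(c : ℝ)⌋ := Int.floor_le_floor (by nlinarith)
      simpa using this
  have himg : univ.image f ⊆ Fintype.piFinset
      fun _ : Γ => Finset.Icc (-(c : ℤ)) c ×ˢ Finset.Icc (-(c : ℤ)) c := fun v hv => by
    obtain ⟨x, -, rfl⟩ := Finset.mem_image.1 hv
    refine Fintype.mem_piFinset.2 fun γ => Finset.mem_product.2 ⟨hfl _ ?_, hfl _ ?_⟩
    · exact (Complex.abs_re_le_norm _).trans (AddChar.norm_apply _ _).le
    · exact (Complex.abs_im_le_norm _).trans (AddChar.norm_apply _ _).le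
  have hcard : (univ.image f).card ≤ ((2 * c + 1) ^ 2) ^ Γ.card := by
    refine (Finset.card_le_card himg).trans ?_
    rw [Fintype.card_piFinset]
    simp only [Finset.card_product, Int.card_Icc, Finset.prod_const, Finset.card_univ,
      Fintype.card_coe]
    rw [show ((c : ℤ) + 1 - -(c : ℤ)).toNat = 2 * c + 1 by omega, ← sq]
  have hfib : ∀ v ∈ univ.image f, (univ.filter fun x => f x = v).card
      ≤ (bohr Γ ρ : Finset G).card := fun v hv => by
    obtain ⟨y, -, rfl⟩ := Finset.mem_image.1 hv
    refine Finset.card_le_card_of_injOn (fun x => x - y) (fun x hx => ?_)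
      fun x _ x' _ h => sub_left_injective h
    have hx : f x = f y := (Finset.mem_filter.1 hx).2
    refine mem_bohr.2 fun γ hγ => ?_
    rw [norm_sub_char]
    have h1 := Prod.ext_iff.1 (congrFun hx ⟨γ, hγ⟩)
    have hd : ∀ r s : ℝ, ⌊r * c⌋ = ⌊s * c⌋ → |r - s| ≤ 1 / c := fun r s h => by
      have h2 := (Int.abs_sub_lt_one_of_floor_eq_floor h).le
      rwa [← sub_mul, abs_mul, abs_of_pos hc', ← le_div_iff₀ hc'] at h2
    refine (Complex.norm_le_abs_re_add_abs_im _).trans (le_trans ?_ hρ)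
    rw [Complex.sub_re, Complex.sub_im]
    have h2 := hd _ _ h1.1
    have h3 := hd _ _ h1.2
    calc _ ≤ 1 / (c : ℝ) + 1 / c := add_le_add h2 h3
      _ = 2 / c := by ring
  calc Fintype.card G = (univ : Finset G).card := rfl
    _ ≤ (bohr Γ ρ : Finset G).card * (univ.image f).card := Finset.card_le_mul_card_image _ _ hfib
    _ ≤ _ := Nat.mul_le_mul_left _ hcard

/-- Regular Bohr sets of level `m`: rank at most `m`, width about `1 / (E * (2 * J) ^ m)`, and
little growth when the width is enlarged by the width allowed at the next level. -/
def Reg (E J m : ℕ) (B : Finset G) : Prop :=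
  ∃ (Γ : Finset (AddChar G ℂ)) (ρ : ℝ), Γ.card ≤ m ∧ B = bohr Γ ρ ∧
    1 / (E * (2 * J) ^ m : ℝ) / 2 ≤ ρ ∧ ρ ≤ 1 / (E * (2 * J) ^ m : ℝ) ∧
    ((bohr Γ (ρ + 1 / (E * (2 * J) ^ (m + 1) : ℝ)) : Finset G).card : ℝ) ≤ (1 + 1 / E) * B.card

lemma reg_univ (E J : ℕ) : Reg E J 0 (univ : Finset G) := by
  have hb : ∀ ρ : ℝ, (bohr ∅ ρ : Finset G) = univ := fun ρ => by ext x; simp [mem_bohr]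
  refine ⟨∅, 1 / (E * (2 * J) ^ 0 : ℝ), by simp, (hb _).symm, ?_, le_rfl, ?_⟩
  · have : (0 : ℝ) ≤ 1 / (E * (2 * J) ^ 0 : ℝ) := by positivity
    linarith
  · rw [hb]
    have : (0 : ℝ) ≤ 1 / E * (univ : Finset G).card := by positivity
    linarith

lemma card_le_reg_aux (Γ : Finset (AddChar G ℂ)) {E J M m : ℕ} (hE : 0 < E) (hJ : 0 < J)
    (hm : m ≤ M) (hΓ : Γ.card ≤ m) {ρ : ℝ} (hρ : 1 / (E * (2 * J) ^ m : ℝ) / 2 ≤ ρ) :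
    Fintype.card G ≤ (bohr Γ ρ : Finset G).card * (9 * (E * (2 * J) ^ M)) ^ (2 * M) := by
  set W := E * (2 * J) ^ m with hW
  have hW0 : 0 < W := by positivity
  have h1 := card_le_bohr Γ (ρ := ρ) (c := 4 * W) (by omega) (by
    refine le_trans (le_of_eq ?_) hρ
    rw [hW]
    have : (0 : ℝ) < E := by exact_mod_cast hE
    have : (0 : ℝ) < J := by exact_mod_cast hJ
    push_cast
    field_simp
    norm_num)
  refine h1.trans (Nat.mul_le_mul_left _ ?_)
  have hWM : W ≤ E * (2 * J) ^ M := Nat.mul_le_mul_left _ (Nat.pow_le_pow_right (by omega) hm)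
  rw [← pow_mul]
  calc (2 * (4 * W) + 1) ^ (2 * Γ.card) ≤ (9 * (E * (2 * J) ^ M)) ^ (2 * Γ.card) :=
        Nat.pow_le_pow_left (by omega) _
    _ ≤ _ := Nat.pow_le_pow_right (by omega) (by omega)

lemma Reg.card_le {E J M m : ℕ} (hE : 0 < E) (hJ : 0 < J) (hm : m ≤ M) {B : Finset G}
    (hB : Reg E J m B) : Fintype.card G ≤ B.card * (9 * (E * (2 * J) ^ M)) ^ (2 * M) := by
  obtain ⟨Γ, ρ, hΓ, rfl, hρ, -, -⟩ := hB
  exact card_le_reg_aux Γ hE hJ hm hΓ hρ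

/-- Regular Bohr sets form a Bohr system. The width at the next level is found by pigeonholing the
growth of the Bohr set over `J` consecutive widths. -/
lemma reg_system {E J M : ℕ} (hE : 0 < E) (hJ : 0 < J)
    (hbig : ((9 * (E * (2 * J) ^ M)) ^ (2 * M) : ℝ) < (1 + 1 / E) ^ J) :
    BohrSystem (G := G) (Reg E J) M (1 / E) := by
  have hE' : (0 : ℝ) < E := by exact_mod_cast hE
  have hJ' : (0 : ℝ) < J := by exact_mod_cast hJ
  have hJ1 : (1 : ℝ) ≤ J := by exact_mod_cast hJ
  have hs0 : ∀ m : ℕ, (0 : ℝ) < 1 / (E * (2 * J) ^ m : ℝ) := fun m => by positivity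
  have hsucc : ∀ m : ℕ, J * (1 / (E * (2 * J) ^ (m + 1) : ℝ)) = 1 / (E * (2 * J) ^ m : ℝ) / 2 :=
    fun m => by rw [pow_succ]; field_simp
  have hdec : ∀ m : ℕ, 1 / (E * (2 * J) ^ (m + 1) : ℝ) ≤ 1 / (E * (2 * J) ^ m : ℝ) / 2 := fun m => by
    rw [← hsucc]
    exact le_mul_of_one_le_left (hs0 _).le hJ1
  have hsE : ∀ m : ℕ, 1 / (E * (2 * J) ^ m : ℝ) ≤ 1 / E := fun m => by
    refine one_div_le_one_div_of_le hE' (le_mul_of_one_le_right hE'.le (one_le_pow₀ ?_))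
    linarith
  refine ⟨?_, ?_, ?_⟩
  · rintro m B ⟨Γ, ρ, -, rfl, hρ, -, -⟩
    exact zero_mem_bohr Γ (by linarith [hs0 m])
  · rintro m B ⟨Γ, ρ, -, rfl, -, -, -⟩ b hb
    exact neg_mem_bohr hb
  · rintro m B ⟨Γ, ρ, hΓ, rfl, hρ, hρ', hreg⟩ hm γ
    classical
    set s := 1 / (E * (2 * J) ^ (m + 1) : ℝ) with hs
    set s' := 1 / (E * (2 * J) ^ (m + 1 + 1) : ℝ) with hs'
    have hs_pos : 0 < s := hs0 _
    have hs'_pos : 0 < s' := hs0 _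
    have hJs : J * s' = s / 2 := hsucc (m + 1)
    have hcard : (insert γ Γ).card ≤ m + 1 := (Finset.card_insert_le _ _).trans (by omega)
    obtain ⟨j, hj, hgrow⟩ : ∃ j < J,
        ((bohr (insert γ Γ) (s / 2 + (j + 1 : ℕ) * s') : Finset G).card : ℝ)
          ≤ (1 + 1 / E) * (bohr (insert γ Γ) (s / 2 + j * s') : Finset G).card := by
      by_contra! hcon
      have key : ∀ j ≤ J, (1 + 1 / E : ℝ) ^ j * (bohr (insert γ Γ) (s / 2) : Finset G).card
          ≤ (bohr (insert γ Γ) (s / 2 + j * s') : Finset G).card := by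
        intro j
        induction j with
        | zero => intro _; simp
        | succ j ih =>
          intro hj
          refine le_trans ?_ (hcon j (by omega)).le
          rw [pow_succ', mul_assoc]
          exact mul_le_mul_of_nonneg_left (ih (by omega)) (by positivity)
      have h1 := key J le_rfl
      have h2 := card_le_reg_aux (insert γ Γ) hE hJ (M := M) (by omega) hcard (ρ := s / 2) le_rfl
      have h3 : ((bohr (insert γ Γ) (s / 2 + J * s') : Finset G).card : ℝ) ≤ Fintype.card G := by
        exact_mod_cast Finset.card_le_univ _
      have h4 : (Fintype.card G : ℝ) ≤ (bohr (insert γ Γ) (s / 2) : Finset G).card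
          * (9 * (E * (2 * J) ^ M)) ^ (2 * M) := by exact_mod_cast h2
      have h5 : (0 : ℝ) < (bohr (insert γ Γ) (s / 2) : Finset G).card := by
        exact_mod_cast Finset.card_pos.2 ⟨0, zero_mem_bohr _ (by positivity)⟩
      nlinarith [mul_lt_mul_of_pos_right hbig h5]
    have hjs : (j : ℝ) * s' ≤ s / 2 := by
      rw [← hJs]
      exact mul_le_mul_of_nonneg_right (by exact_mod_cast hj.le) hs'_pos.le
    have hj0 : 0 ≤ (j : ℝ) * s' := by positivity
    have hss : s ≤ 1 / (E * (2 * J) ^ m : ℝ) / 2 := hdec m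
    refine ⟨bohr (insert γ Γ) (s / 2 + j * s'), ⟨insert γ Γ, s / 2 + j * s', hcard, rfl,
      by linarith, by linarith, ?_⟩, ⟨zero_mem_bohr _ (by positivity), ?_, ?_⟩, ?_⟩
    · refine le_trans (le_of_eq ?_) hgrow
      congr 3
      push_cast
      ring
    · exact bohr_mono (Finset.subset_insert _ _) (by linarith)
    · refine le_trans ?_ hreg
      have : bohr Γ ρ + bohr (insert γ Γ) (s / 2 + j * s') ⊆ (bohr Γ (ρ + s) : Finset G) := by
        intro z hz
        obtain ⟨x, hx, y, hy, rfl⟩ := Finset.mem_add.1 hz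
        exact add_mem_bohr hx (bohr_mono (Finset.subset_insert _ _) (by linarith) hy)
      exact_mod_cast Finset.card_le_card this
    · intro b hb
      have := mem_bohr.1 hb γ (Finset.mem_insert_self _ _)
      linarith [hsE (m + 1)]

/-! ### Choice of parameters -/

/-- With `ε` a multiple of `ξ * l ^ 8`, the uniformity error of `stable_increment` is `O(l)`. -/
lemma tau_bound {l ξ ε τ : ℝ} (hl : 0 < l) (hl1 : l ≤ 1) (hξ : 0 < ξ) (hξ1 : ξ ≤ 1)
    (hε : ε = ξ * l ^ 8 / 1000) (hτ : τ = 8 * l) :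
    l + 2 / l ^ 3 * ((3 * ε + l ^ 4 + 41 * ε / (ξ / 4) / l ^ 4) + 2 * ε) + ε ≤ τ := by
  have h1 : 41 * ε / (ξ / 4) / l ^ 4 = 164 / 1000 * l ^ 4 := by
    rw [hε]; field_simp; ring
  have hl4 : l ^ 4 ≤ l := pow_le_of_le_one hl.le hl1 (by norm_num)
  have h2 : ε ≤ l ^ 4 / 1000 := by
    rw [hε]
    have h3 : l ^ 8 ≤ l ^ 4 := pow_le_pow_of_le_one hl.le hl1 (by norm_num)
    have h4 : ξ * l ^ 8 ≤ 1 * l ^ 4 := mul_le_mul hξ1 h3 (by positivity) zero_le_one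
    linarith
  have h3 : 2 / l ^ 3 * ((3 * ε + l ^ 4 + 41 * ε / (ξ / 4) / l ^ 4) + 2 * ε)
      ≤ 2 / l ^ 3 * (2 * l ^ 4) := by
    refine mul_le_mul_of_nonneg_left ?_ (by positivity)
    rw [h1]
    have : 0 < l ^ 4 := by positivity
    linarith
  have h4 : 2 / l ^ 3 * (2 * l ^ 4) = 4 * l := by field_simp; ring
  rw [hτ]
  linarith

lemma width_bound {E M : ℕ} (hE : 0 < E) (hM : 0 < M) :
    (9 * (E * (2 * (10000 * M ^ 4 * E ^ 3)) ^ M)) ^ (2 * M) ≤ 2 ^ (44 * M ^ 3 * E) := by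
  have hME : 1 ≤ M * E := Nat.mul_pos hM hE
  have h1 : 9 * (E * (2 * (10000 * M ^ 4 * E ^ 3)) ^ M) ≤ (180000 * (M * E) ^ 4) ^ M := by
    calc 9 * (E * (2 * (10000 * M ^ 4 * E ^ 3)) ^ M)
        = (9 * E) * (2 * (10000 * M ^ 4 * E ^ 3)) ^ M := by ring
      _ ≤ (9 * E) ^ M * (2 * (10000 * M ^ 4 * E ^ 3)) ^ M :=
        Nat.mul_le_mul_right _ (Nat.le_self_pow hM.ne' _)
      _ = (180000 * (M * E) ^ 4) ^ M := by rw [← mul_pow]; congr 1; ring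
  have h2 : 180000 * (M * E) ^ 4 ≤ 2 ^ (22 * (M * E)) := by
    calc 180000 * (M * E) ^ 4 ≤ 2 ^ 18 * (2 ^ (M * E)) ^ 4 :=
          Nat.mul_le_mul (by norm_num) (Nat.pow_le_pow_left Nat.lt_two_pow_self.le _)
      _ = 2 ^ (18 + M * E * 4) := by rw [← pow_mul, ← pow_add]
      _ ≤ _ := Nat.pow_le_pow_right (by norm_num) (by omega)
  calc _ ≤ ((2 ^ (22 * (M * E))) ^ M) ^ (2 * M) :=
        Nat.pow_le_pow_left (h1.trans (Nat.pow_le_pow_left h2 _)) _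
    _ = 2 ^ (44 * M ^ 3 * E) := by rw [← pow_mul, ← pow_mul]; congr 1; ring

lemma growth_bound {E M : ℕ} (hE : 0 < E) (hM : 0 < M) :
    ((2 : ℝ) ^ (44 * M ^ 3 * E)) < (1 + 1 / E) ^ (10000 * M ^ 4 * E ^ 3) := by
  have hE' : (0 : ℝ) < E := by exact_mod_cast hE
  have h1 : (2 : ℝ) ≤ (1 + 1 / E) ^ E := by
    have := one_add_mul_le_pow (a := (1 / E : ℝ)) (by
      have : (0 : ℝ) ≤ 1 / E := by positivity
      linarith) E
    rwa [mul_one_div_cancel hE'.ne', one_add_one_eq_two] at this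
  calc (2 : ℝ) ^ (44 * M ^ 3 * E) < (2 : ℝ) ^ (10000 * M ^ 4 * E ^ 2) := by
        refine pow_lt_pow_right₀ one_lt_two ?_
        have : 0 < M ^ 3 * E := by positivity
        have hME : 1 ≤ M * E := Nat.mul_pos hM hE
        calc 44 * M ^ 3 * E < 10000 * (M ^ 3 * E) := by linarith
          _ ≤ 10000 * (M ^ 3 * E) * (M * E) := Nat.le_mul_of_pos_right _ hME
          _ = _ := by ring
    _ ≤ ((1 + 1 / E : ℝ) ^ E) ^ (10000 * M ^ 4 * E ^ 2) := pow_le_pow_left₀ (by norm_num) h1 _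
    _ = _ := by rw [← pow_mul]; congr 1; ring

/-- The final count, before the parameters are estimated. -/
lemma count_of_params {D ν X Lq E M : ℕ} (hD : 0 < D) (hν : ν = 2048 * D ^ 12)
    (hX : X = (8192 * D ^ 12) ^ ν * D) (hLq : Lq = 800000 * D ^ 12 * X ^ 4)
    (hE : E = 1000 * X * Lq ^ 8) (hM : M = ν * (6 * E + 1) + 6 * E + 3)
    {a : G → G → ℝ} (ha : ∀ x y, a x y = 0 ∨ a x y = 1) (hd : (2 / D : ℝ) ≤ 𝔼 x, 𝔼 y, a x y) :
    (Fintype.card G : ℝ) ^ 3 ≤ 16 * D ^ 3 * X ^ 2 * (2 ^ (44 * M ^ 3 * E)) ^ 3 * cnt a := by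
  have hX0 : 0 < X := by rw [hX]; positivity
  have hLq0 : 0 < Lq := by rw [hLq]; positivity
  have hE0 : 0 < E := by rw [hE]; positivity
  have hM0 : 0 < M := by rw [hM]; omega
  have hD' : (0 : ℝ) < D := by exact_mod_cast hD
  have hX' : (0 : ℝ) < X := by exact_mod_cast hX0
  have hLq' : (0 : ℝ) < Lq := by exact_mod_cast hLq0
  have hE' : (0 : ℝ) < E := by exact_mod_cast hE0
  have inv1 : ∀ k : ℕ, 0 < k → (1 / k : ℝ) ≤ 1 := fun k hk =>
    (div_le_one (by exact_mod_cast hk)).2 (by exact_mod_cast hk)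
  have hw := width_bound hE0 hM0
  set J := 10000 * M ^ 4 * E ^ 3 with hJ
  have hJ0 : 0 < J := by positivity
  set R : ℕ := 2 ^ (44 * M ^ 3 * E) with hR
  have hR' : (0 : ℝ) < R := by rw [hR]; positivity
  have hw' : ((9 * (E * (2 * J) ^ M)) ^ (2 * M) : ℝ) ≤ 2 ^ (44 * M ^ 3 * E) := by
    exact_mod_cast hw
  have hS : BohrSystem (G := G) (Reg E J) M (1 / E) :=
    reg_system hE0 hJ0 (hw'.trans_lt (growth_bound hE0 hM0))
  have hβ : ∀ m (B : Finset G), m ≤ M → Reg E J m B → (Fintype.card G : ℝ) / R ≤ B.card := by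
    intro m B hm hB
    rw [div_le_iff₀ hR']
    have := (hB.card_le hE0 hJ0 hm).trans (Nat.mul_le_mul_left _ hw)
    exact_mod_cast this
  have hEx : Excess (G := G) (Reg E J) (cnt a) (1 / D) (1 / D) 0 := by
    refine ⟨a, fun _ => 1, fun _ => 1, univ, fun _ => Or.inr rfl, fun _ => Or.inr rfl, ha,
      fun x y => ?_, le_rfl, reg_univ E J, ?_⟩
    · rcases ha x y with h | h <;> rw [h] <;> norm_num
    · have hne : (univ : Finset G).Nonempty := ⟨0, mem_univ _⟩
      simp only [expect_sub_distrib, mul_one, expect_const hne]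
      have : (2 / D : ℝ) = 1 / D + 1 / D := by ring
      linarith
  have hmain := Excess.many (n := 2 * E) (ν := ν) (l := 1 / Lq) (β := Fintype.card G / R)
    (ξ' := 1 / X) hS (by positivity) (by positivity) (inv1 D hD) (by positivity) (by positivity)
    (by
      rw [hX]
      push_cast
      refine le_of_eq ?_
      rw [one_div_pow, div_div, one_div_pow, one_div_mul_one_div, mul_comm (8192 : ℝ)])
    (tau_bound (by positivity) (inv1 _ hLq0) (by positivity) (inv1 _ hX0)
      (by rw [hE]; push_cast; field_simp)
      (by rw [hLq]; push_cast; field_simp; norm_num))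
    (by positivity) hβ
    (by push_cast; rw [mul_one_div, mul_div_cancel_right₀ _ hE'.ne'])
    (by rw [hν]; push_cast; field_simp; norm_num)
    (by rw [hM]; ring_nf; omega) hEx
  have h1 : (1 / D : ℝ) ^ 3 * (1 / X) ^ 2 / 16 * (Fintype.card G / R) ^ 3
      = (Fintype.card G : ℝ) ^ 3 / (16 * D ^ 3 * X ^ 2 * (R : ℝ) ^ 3) := by
    field_simp
  rw [h1, div_le_iff₀ (by positivity)] at hmain
  refine hmain.trans (le_of_eq ?_)
  rw [hR]
  push_cast
  ring

/-- The parameters are at most doubly exponential in a power of `D`. -/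
lemma params_bound {D ν X Lq E M : ℕ} (hD : 80 ≤ D) (hν : ν = 2048 * D ^ 12)
    (hX : X = (8192 * D ^ 12) ^ ν * D) (hLq : Lq = 800000 * D ^ 12 * X ^ 4)
    (hE : E = 1000 * X * Lq ^ 8) (hM : M = ν * (6 * E + 1) + 6 * E + 3) :
    16 * D ^ 3 * X ^ 2 * (2 ^ (44 * M ^ 3 * E)) ^ 3 ≤ 2 ^ 2 ^ D ^ 20 := by
  have hs : ∀ k, 80 * D ^ k ≤ D ^ (k + 1) := fun k => by
    rw [pow_succ']; exact Nat.mul_le_mul_right _ hD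
  have h13 := hs 13
  have h14 := hs 14
  have h15 := hs 15
  have h16 := hs 16
  have h17 := hs 17
  have h18 := hs 18
  have h19 := hs 19
  have h1 : D ≤ D ^ 13 := Nat.le_self_pow (by norm_num) _
  norm_num only at h13 h14 h15 h16 h17 h18 h19
  have hD2 : D ≤ 2 ^ D := Nat.lt_two_pow_self.le
  have hDk : ∀ k, D ^ k ≤ 2 ^ (D * k) := fun k => by
    rw [pow_mul]; exact Nat.pow_le_pow_left hD2 k
  have two : ∀ {i j : ℕ}, i ≤ j → 2 ^ i ≤ 2 ^ j := fun h => Nat.pow_le_pow_right (by norm_num) h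
  have bX : X ≤ 2 ^ D ^ 16 := by
    have hb : 8192 * D ^ 12 ≤ 2 ^ (13 + D * 12) := by
      rw [pow_add]; exact Nat.mul_le_mul (by norm_num) (hDk 12)
    calc X ≤ (2 ^ (13 * D)) ^ ν * 2 ^ D := by
          rw [hX]
          exact Nat.mul_le_mul (Nat.pow_le_pow_left (hb.trans (two (by omega))) _) hD2
      _ = 2 ^ (26624 * D ^ 13 + D) := by
          rw [← pow_mul, ← pow_add, hν]; congr 1; ring
      _ ≤ _ := two (by omega)
  have bL : Lq ≤ 2 ^ D ^ 17 := by
    calc Lq ≤ 2 ^ 20 * 2 ^ (D * 12) * (2 ^ D ^ 16) ^ 4 := by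
          rw [hLq]
          exact Nat.mul_le_mul (Nat.mul_le_mul (by norm_num) (hDk 12)) (Nat.pow_le_pow_left bX _)
      _ = 2 ^ (20 + D * 12 + D ^ 16 * 4) := by rw [← pow_mul, ← pow_add, ← pow_add]
      _ ≤ _ := two (by omega)
  have bE : E ≤ 2 ^ D ^ 18 := by
    calc E ≤ 2 ^ 10 * 2 ^ D ^ 16 * (2 ^ D ^ 17) ^ 8 := by
          rw [hE]
          exact Nat.mul_le_mul (Nat.mul_le_mul (by norm_num) bX) (Nat.pow_le_pow_left bL _)
      _ = 2 ^ (10 + D ^ 16 + D ^ 17 * 8) := by rw [← pow_mul, ← pow_add, ← pow_add]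
      _ ≤ _ := two (by omega)
  have hX0 : 0 < X := by rw [hX]; positivity
  have hLq0 : 0 < Lq := by rw [hLq]; positivity
  have hE0 : 0 < E := by rw [hE]; positivity
  have bν : ν ≤ 2 ^ (11 + D * 12) := by
    rw [hν, pow_add]; exact Nat.mul_le_mul (by norm_num) (hDk 12)
  have bM : M ≤ 2 ^ D ^ 19 := by
    have hν0 : 1 ≤ ν := by rw [hν]; exact Nat.succ_le_of_lt (by positivity)
    calc M ≤ 2 ^ 4 * ν * E := by
          rw [hM]
          nlinarith [Nat.mul_le_mul hν0 hE0, Nat.mul_le_mul_left ν hE0, Nat.mul_le_mul_right E hν0]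
      _ ≤ 2 ^ 4 * 2 ^ (11 + D * 12) * 2 ^ D ^ 18 :=
          Nat.mul_le_mul (Nat.mul_le_mul_left _ bν) bE
      _ = 2 ^ (4 + (11 + D * 12) + D ^ 18) := by rw [← pow_add, ← pow_add]
      _ ≤ _ := two (by omega)
  have bR : 44 * M ^ 3 * E * 3 ≤ 2 ^ (8 + D ^ 19 * 3 + D ^ 18) := by
    calc 44 * M ^ 3 * E * 3 = 132 * M ^ 3 * E := by ring
      _ ≤ 2 ^ 8 * (2 ^ D ^ 19) ^ 3 * 2 ^ D ^ 18 :=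
          Nat.mul_le_mul (Nat.mul_le_mul (by norm_num) (Nat.pow_le_pow_left bM _)) bE
      _ = _ := by rw [← pow_mul, ← pow_add, ← pow_add]
  have bQ : 4 + D * 3 + D ^ 16 * 2 ≤ 2 ^ (8 + D ^ 19 * 3 + D ^ 18) :=
    (show 4 + D * 3 + D ^ 16 * 2 ≤ 8 + D ^ 19 * 3 + D ^ 18 by omega).trans Nat.lt_two_pow_self.le
  calc 16 * D ^ 3 * X ^ 2 * (2 ^ (44 * M ^ 3 * E)) ^ 3
      ≤ 2 ^ 4 * 2 ^ (D * 3) * (2 ^ D ^ 16) ^ 2 * (2 ^ (44 * M ^ 3 * E)) ^ 3 :=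
        Nat.mul_le_mul_right _ (Nat.mul_le_mul (Nat.mul_le_mul (by norm_num) (hDk 3))
          (Nat.pow_le_pow_left bX _))
    _ = 2 ^ (4 + D * 3 + D ^ 16 * 2 + 44 * M ^ 3 * E * 3) := by
        simp only [← pow_mul, ← pow_add]
    _ ≤ 2 ^ 2 ^ (1 + (8 + D ^ 19 * 3 + D ^ 18)) := by
        refine two ?_
        rw [pow_add 2 1]
        omega
    _ ≤ _ := two (two (by omega))

/-- The corners theorem in finite abelian groups of arbitrary order, with supersaturation. -/
lemma group_corners {D : ℕ} (hD : 80 ≤ D) {a : G → G → ℝ} (ha : ∀ x y, a x y = 0 ∨ a x y = 1)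
    (hd : (2 / D : ℝ) ≤ 𝔼 x, 𝔼 y, a x y) :
    (Fintype.card G : ℝ) ^ 3 ≤ (2 ^ 2 ^ D ^ 20 : ℝ) * cnt a := by
  have hcnt : 0 ≤ cnt a := by
    have h0 : ∀ x y, 0 ≤ a x y := fun x y => by rcases ha x y with h | h <;> norm_num [h]
    exact Finset.sum_nonneg fun x _ => Finset.sum_nonneg fun y _ => Finset.sum_nonneg fun z _ =>
      mul_nonneg (mul_nonneg (h0 _ _) (h0 _ _)) (h0 _ _)
  refine (count_of_params (by omega) rfl rfl rfl rfl rfl ha hd).trans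
    (mul_le_mul_of_nonneg_right ?_ hcnt)
  exact_mod_cast params_bound hD rfl rfl rfl rfl rfl

end Group

/-! ### Passing from the integers to a cyclic group -/

/-- The nontrivial integer corners in `A`. -/
def intCorners (A : Finset (ℤ × ℤ)) : Set (ℤ × ℤ × ℤ) :=
  { t : ℤ × ℤ × ℤ | t.2.2 ≠ 0 ∧ (t.1, t.2.1) ∈ A ∧ (t.1 + t.2.2, t.2.1) ∈ A ∧
    (t.1, t.2.1 + t.2.2) ∈ A }

/-- The indicator of the image of `A` in the square of `ℤ / 2N`. -/
def lift (N : ℕ) (A : Finset (ℤ × ℤ)) (x y : ZMod (2 * N)) : ℝ :=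
  if ((x.val : ℤ), (y.val : ℤ)) ∈ A then 1 else 0

variable {N : ℕ} {A : Finset (ℤ × ℤ)}

lemma mem_range (hA : A ⊆ I0 N ×ˢ I0 N) {x y : ℤ} (h : (x, y) ∈ A) :
    (0 ≤ x ∧ x < N) ∧ 0 ≤ y ∧ y < N := by
  simpa [I0] using hA h

lemma intCorners_finite (hA : A ⊆ I0 N ×ˢ I0 N) : (intCorners A).Finite := by
  refine (Finset.finite_toSet
    (Finset.Icc (0 : ℤ) N ×ˢ Finset.Icc (0 : ℤ) N ×ˢ Finset.Icc (-(N : ℤ)) N)).subset ?_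
  rintro ⟨x, y, z⟩ ⟨-, h1, h2, -⟩
  have h1 := mem_range hA h1
  have h2 := mem_range hA h2
  simp only [Finset.coe_product, Set.mem_prod, Finset.mem_coe, Finset.mem_Icc] at *
  omega

lemma card_le_sum_lift [NeZero N] (hA : A ⊆ I0 N ×ˢ I0 N) :
    (A.card : ℝ) ≤ ∑ x, ∑ y, lift N A x y := by
  have hval : ∀ x : ℤ, 0 ≤ x → x < N → (((x : ZMod (2 * N)).val : ℕ) : ℤ) = x := fun x h0 h1 => by
    rw [ZMod.val_intCast]
    exact Int.emod_eq_of_lt h0 (by push_cast; linarith)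
  have h1 : ∑ x, ∑ y, lift N A x y = ((univ.filter fun p : ZMod (2 * N) × ZMod (2 * N) =>
      ((p.1.val : ℤ), (p.2.val : ℤ)) ∈ A).card : ℝ) := by
    rw [← Fintype.sum_prod_type']
    simp [lift]
  rw [h1]
  norm_cast
  refine Finset.card_le_card_of_injOn (fun p => ((p.1 : ZMod (2 * N)), (p.2 : ZMod (2 * N))))
    (fun p hp => ?_) fun p hp q hq h => ?_
  · have := mem_range hA (x := p.1) (y := p.2) hp
    simp only [Finset.coe_filter, Set.mem_ofPred_eq, Finset.mem_univ, true_and]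
    rw [hval _ this.1.1 this.1.2, hval _ this.2.1 this.2.2]
    exact hp
  · have h2 := mem_range hA (x := p.1) (y := p.2) hp
    have h3 := mem_range hA (x := q.1) (y := q.2) hq
    have h4 := Prod.ext_iff.1 h
    refine Prod.ext ?_ ?_
    · rw [← hval _ h2.1.1 h2.1.2, ← hval _ h3.1.1 h3.1.2]
      exact congrArg _ (congrArg _ h4.1)
    · rw [← hval _ h2.2.1 h2.2.2, ← hval _ h3.2.1 h3.2.2]
      exact congrArg _ (congrArg _ h4.2)

/-- The corners of the lift come from integer corners, because two integers of absolute value less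
than `N` which agree modulo `2N` are equal. -/
lemma cnt_lift_le [NeZero N] (hA : A ⊆ I0 N ×ˢ I0 N) :
    cnt (lift N A) ≤ (intCorners A).ncard + (2 * N : ℝ) ^ 2 := by
  classical
  set T : Finset (ZMod (2 * N) × ZMod (2 * N) × ZMod (2 * N)) :=
    univ.filter fun t => t.2.2 ≠ 0 ∧ ((t.1.val : ℤ), (t.2.1.val : ℤ)) ∈ A ∧
      (((t.1 + t.2.2).val : ℤ), (t.2.1.val : ℤ)) ∈ A ∧
      ((t.1.val : ℤ), ((t.2.1 + t.2.2).val : ℤ)) ∈ A with hT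
  have hTS : T.card ≤ (intCorners A).ncard := by
    rw [← Set.ncard_coe_finset]
    refine Set.ncard_le_ncard_of_injOn
      (fun t => ((t.1.val : ℤ), (t.2.1.val : ℤ), ((t.1 + t.2.2).val : ℤ) - t.1.val))
      (fun t ht => ?_) (fun t ht s hs h => ?_) (intCorners_finite hA)
    · obtain ⟨h0, h1, h2, h3⟩ := (Finset.mem_filter.1 (Finset.mem_coe.1 ht)).2
      have r1 := mem_range hA h1
      have r2 := mem_range hA h2
      have r3 := mem_range hA h3
      have hmod : ((2 * N : ℕ) : ℤ) ∣ (((t.1 + t.2.2).val : ℤ) - t.1.val)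
          - (((t.2.1 + t.2.2).val : ℤ) - t.2.1.val) := by
        rw [← ZMod.intCast_zmod_eq_zero_iff_dvd]
        push_cast
        simp
      have heq : ((t.1 + t.2.2).val : ℤ) - t.1.val = ((t.2.1 + t.2.2).val : ℤ) - t.2.1.val := by
        obtain ⟨k, hk⟩ := hmod
        push_cast at hk
        have hN : (0 : ℤ) < N := by exact_mod_cast NeZero.pos N
        have : k = 0 := by
          by_contra hk0
          rcases lt_or_gt_of_ne hk0 with h | h
          · nlinarith
          · nlinarith
        rw [this] at hk
        linarith
      refine ⟨fun hz => h0 ?_, h1, ?_, ?_⟩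
      · have : (t.1 + t.2.2).val = t.1.val := by
          have := sub_eq_zero.1 hz
          exact_mod_cast this
        simpa using ZMod.val_injective _ this
      · simpa using h2
      · simp only
        rw [heq]
        simpa using h3
    · have h1 := Prod.ext_iff.1 h
      have h2 := Prod.ext_iff.1 h1.2
      simp only at h1 h2
      have e1 : t.1 = s.1 := ZMod.val_injective _ (by exact_mod_cast h1.1)
      have e2 : t.2.1 = s.2.1 := ZMod.val_injective _ (by exact_mod_cast h2.1)
      have e3 : t.1 + t.2.2 = s.1 + s.2.2 := by
        refine ZMod.val_injective _ ?_
        have := h2.2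
        rw [h1.1] at this
        have := sub_left_injective this
        exact_mod_cast this
      rw [e1] at e3
      exact Prod.ext e1 (Prod.ext e2 (add_left_cancel e3))
  have hpt : ∀ t : ZMod (2 * N) × ZMod (2 * N) × ZMod (2 * N),
      lift N A t.1 t.2.1 * lift N A (t.1 + t.2.2) t.2.1 * lift N A t.1 (t.2.1 + t.2.2)
        ≤ (if t ∈ T then 1 else 0) + if t.2.2 = 0 then 1 else 0 := fun t => by
    simp only [hT, Finset.mem_filter, Finset.mem_univ, true_and, lift]
    split_ifs <;> simp_all
  have h1 : cnt (lift N A) = ∑ t : ZMod (2 * N) × ZMod (2 * N) × ZMod (2 * N),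
      lift N A t.1 t.2.1 * lift N A (t.1 + t.2.2) t.2.1 * lift N A t.1 (t.2.1 + t.2.2) := by
    simp only [Fintype.sum_prod_type, cnt]
  have h2 : ∑ t : ZMod (2 * N) × ZMod (2 * N) × ZMod (2 * N), (if t.2.2 = 0 then (1 : ℝ) else 0)
      = (2 * N : ℝ) ^ 2 := by
    simp only [Fintype.sum_prod_type]
    simp [ZMod.card]
    ring
  calc cnt (lift N A) ≤ ∑ t, ((if t ∈ T then 1 else 0) + if t.2.2 = 0 then (1 : ℝ) else 0) := by
        rw [h1]; exact Finset.sum_le_sum fun t _ => hpt t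
    _ = T.card + (2 * N : ℝ) ^ 2 := by
        rw [Finset.sum_add_distrib, h2]; simp
    _ ≤ _ := by
        have : (T.card : ℝ) ≤ (intCorners A).ncard := by exact_mod_cast hTS
        linarith

/-- The doubly exponential bounds in terms of `D` and of `δ`. -/
lemma double_exp {δ : ℝ} (hδ : 0 < δ) (hδ1 : δ < 1 / 10) {D : ℕ} (hD : (D : ℝ) ≤ 8 / δ + 1) :
    (2 ^ 2 ^ D ^ 20 : ℝ) ≤ Real.exp (Real.exp (δ ^ (-40 : ℝ))) := by
  have h2 : (2 : ℝ) ≤ Real.exp 1 := by linarith [Real.add_one_le_exp (1 : ℝ)]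
  have hpow : ∀ k : ℕ, (2 : ℝ) ^ k ≤ Real.exp k := fun k => by
    rw [← Real.exp_one_pow]; exact pow_le_pow_left₀ zero_le_two h2 k
  have h10 : 10 ≤ 1 / δ := by
    rw [le_div_iff₀ hδ]; linarith
  have hD2 : (D : ℝ) ≤ (1 / δ) ^ 2 := by
    have : 8 / δ = 8 * (1 / δ) := by ring
    nlinarith
  have h40 : δ ^ (-40 : ℝ) = ((1 / δ) ^ 2) ^ 20 := by
    rw [Real.rpow_neg hδ.le, show (40 : ℝ) = ((2 * 20 : ℕ) : ℝ) by norm_num, Real.rpow_natCast,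
      ← pow_mul, one_div, inv_pow]
  have hD40 : ((D ^ 20 : ℕ) : ℝ) ≤ δ ^ (-40 : ℝ) := by
    rw [h40]
    push_cast
    exact pow_le_pow_left₀ (Nat.cast_nonneg _) hD2 20
  refine (hpow _).trans (Real.exp_le_exp.2 ?_)
  push_cast
  exact (hpow _).trans (Real.exp_le_exp.2 hD40)

lemma corners_bound {δ : ℝ} (hδ : 0 < δ) (hδ1 : δ < 1 / 10)
    (hN : Real.exp (Real.exp (δ ^ (-40 : ℝ))) ≤ (N : ℝ)) (hA : A ⊆ I0 N ×ˢ I0 N)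
    (hcard : δ * (N : ℝ) ^ 2 ≤ A.card) :
    Real.exp (-Real.exp (δ ^ (-40 : ℝ))) * (N : ℝ) ^ 3 ≤ (intCorners A).ncard := by
  have hN0 : (0 : ℝ) < N := (Real.exp_pos _).trans_le hN
  have : NeZero N := ⟨by rintro rfl; simp at hN0⟩
  set D := ⌈8 / δ⌉₊ with hD
  have hD1 : 8 / δ ≤ D := Nat.le_ceil _
  have h80 : 80 < 8 / δ := by rw [lt_div_iff₀ hδ]; linarith
  have hD80 : 80 ≤ D := by
    have : (80 : ℝ) < D := h80.trans_le hD1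
    exact_mod_cast this.le
  have hY := double_exp hδ hδ1 (Nat.ceil_lt_add_one (by positivity : 0 ≤ 8 / δ)).le
  rw [← hD] at hY
  have hD0 : (0 : ℝ) < D := by linarith
  have hdens : (2 / D : ℝ) ≤ 𝔼 x, 𝔼 y, lift N A x y := by
    simp only [Fintype.expect_eq_sum_div_card, ← Finset.sum_div, ZMod.card]
    have h1 := card_le_sum_lift hA
    have h2 : (2 / D : ℝ) ≤ δ / 4 := by
      rw [div_le_iff₀ hδ] at hD1
      rw [div_le_iff₀ hD0]
      nlinarith
    rw [div_div]
    push_cast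
    rw [le_div_iff₀ (by positivity)]
    nlinarith [mul_le_mul_of_nonneg_right h2 (by positivity : (0 : ℝ) ≤ 2 * N * (2 * N))]
  have hmain := group_corners hD80 (a := lift N A)
    (fun x y => by unfold lift; split_ifs <;> simp) hdens
  rw [ZMod.card] at hmain
  push_cast at hmain
  have hup := cnt_lift_le hA
  set Q : ℝ := 2 ^ 2 ^ D ^ 20 with hQ
  have hQ0 : 0 < Q := by positivity
  rw [Real.exp_neg]
  set Y := Real.exp (Real.exp (δ ^ (-40 : ℝ))) with hYdef
  have hYi : Y⁻¹ ≤ Q⁻¹ := inv_anti₀ hQ0 hY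
  refine (mul_le_mul_of_nonneg_right hYi (by positivity)).trans ?_
  rw [inv_mul_le_iff₀ hQ0]
  have h1 := hmain.trans (mul_le_mul_of_nonneg_left hup hQ0.le)
  have hQN : Q ≤ N := hY.trans hN
  have h2 := mul_le_mul_of_nonneg_right hQN (by positivity : (0 : ℝ) ≤ (N : ℝ) ^ 2)
  have h3 : (0 : ℝ) < (N : ℝ) ^ 3 := by positivity
  nlinarith

end Corner

/-- supersaturation for corners. -/
theorem stmt9 :
    ∃ c' : ℝ, 0 < c' ∧
      ∀ δ : ℝ, 0 < δ → δ < 1 / 10 →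
        ∀ N : ℕ, Real.exp (Real.exp (δ ^ (-c'))) ≤ (N : ℝ) →
          ∀ A : Finset (ℤ × ℤ), A ⊆ I0 (N : ℤ) ×ˢ I0 (N : ℤ) →
            δ * (N : ℝ) ^ 2 ≤ (A.card : ℝ) →
            Real.exp (-Real.exp (δ ^ (-c'))) * (N : ℝ) ^ 3 ≤
              (({ t : ℤ × ℤ × ℤ | t.2.2 ≠ 0 ∧ (t.1, t.2.1) ∈ A ∧
                  (t.1 + t.2.2, t.2.1) ∈ A ∧ (t.1, t.2.1 + t.2.2) ∈ A }).ncard : ℝ) :=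
  ⟨40, by norm_num, fun _ hδ hδ1 _ hN _ hA hcard => Corner.corners_bound hδ hδ1 hN hA hcard⟩
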